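/- Let Var(n) = (Σ_{k=1}^{n} (k − k̄(n))²·R_{n,k}) / (Σ_{k=1}^{n} R_{n,k}) be the variance of the number of short chords across all crystallized diagrams with n chords, where k̄(n) = (Σ_{k=1}^{n} k·R_{n,k}) / (Σ_{k=1}^{n} R_{n,k}). Then Var(n) · √(log³ n / (2n)) → 1 as n → ∞; that is, Var(n) is asymptotic to √(2n / log³ n) = k̄(n)³/(2n) asymptotically. -/

import Mathlib

namespace ChordBubbles

/-- A linear chord diagram with `n` chords: a fixed-point-free involution of `Fin (2*n)`. -/
def IsDiagram (n : ℕ) (f : Equiv.Perm (Fin (2 * n))) : Prop :=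
  (∀ i, f (f i) = i) ∧ ∀ i, f i ≠ i

/-- Vertex `i` is an endpoint of a short chord (a chord joining adjacent vertices). -/
def ShortEnd (n : ℕ) (f : Equiv.Perm (Fin (2 * n))) (i : Fin (2 * n)) : Prop :=
  (f i).val = i.val + 1 ∨ (f i).val + 1 = i.val

/-- `[a, b]` delimits a bubble: a maximal nonempty interval of vertices none of which is an
endpoint of a short chord. -/
def IsBubble (n : ℕ) (f : Equiv.Perm (Fin (2 * n))) (a b : ℕ) : Prop :=
  a ≤ b ∧ b < 2 * n ∧
  (∀ i : Fin (2 * n), a ≤ i.val → i.val ≤ b → ¬ ShortEnd n f i) ∧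
  (a = 0 ∨ ∃ j : Fin (2 * n), j.val + 1 = a ∧ ShortEnd n f j) ∧
  (b + 1 = 2 * n ∨ ∃ j : Fin (2 * n), j.val = b + 1 ∧ ShortEnd n f j)

/-- The size (number of vertices) of the bubble `[a, b]`. -/
def bubbleSize (a b : ℕ) : ℕ := b + 1 - a

/-- The number of bridges of the bubble `[a, b]` under the diagram `f`: the number of chords
joining a vertex inside the bubble to one outside it. -/
noncomputable def bridges (n : ℕ) (f : Equiv.Perm (Fin (2 * n))) (a b : ℕ) : ℕ :=
  Nat.card {i : Fin (2 * n) // (a ≤ i.val ∧ i.val ≤ b) ∧ ¬ (a ≤ (f i).val ∧ (f i).val ≤ b)}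

/-- `N n q b` : the number of pairs (diagram, bubble) where the diagram has `n` chords and the
bubble has size `q` and exactly `b` bridges. -/
noncomputable def N (n q b : ℕ) : ℕ :=
  Nat.card {p : Equiv.Perm (Fin (2 * n)) × ℕ × ℕ //
    IsDiagram n p.1 ∧ IsBubble n p.1 p.2.1 p.2.2 ∧
    bubbleSize p.2.1 p.2.2 = q ∧ bridges n p.1 p.2.1 p.2.2 = b}

/-- A diagram is crystallized when all its bubbles are empty, i.e., no chord joins two vertices
lying in the same bubble. -/
def Crystallized (n : ℕ) (f : Equiv.Perm (Fin (2 * n))) : Prop :=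
  ∀ a b, IsBubble n f a b → ∀ i : Fin (2 * n),
    a ≤ i.val → i.val ≤ b → ¬ (a ≤ (f i).val ∧ (f i).val ≤ b)

/-- The number of short chords of a diagram. -/
noncomputable def shortChords (n : ℕ) (f : Equiv.Perm (Fin (2 * n))) : ℕ :=
  Nat.card {i : Fin (2 * n) // (f i).val = i.val + 1}

/-- `R n k` : the number of crystallized diagrams with `n` chords, exactly `k` of them short. -/
noncomputable def R (n k : ℕ) : ℕ :=
  Nat.card {f : Equiv.Perm (Fin (2 * n)) //
    IsDiagram n f ∧ Crystallized n f ∧ shortChords n f = k}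

/-- The mean number of short chords counted across all crystallized diagrams with `n` chords. -/
noncomputable def meanShort (n : ℕ) : ℝ :=
  (∑ k ∈ Finset.Icc 1 n, (k : ℝ) * R n k) / (∑ k ∈ Finset.Icc 1 n, (R n k : ℝ))

/-- The variance of the number of short chords across all crystallized diagrams with
`n` chords. -/
noncomputable def varShort (n : ℕ) : ℝ :=
  (∑ k ∈ Finset.Icc 1 n, ((k : ℝ) - meanShort n) ^ 2 * R n k) /
  (∑ k ∈ Finset.Icc 1 n, (R n k : ℝ))

end ChordBubbles

section
namespace ChordBubbles

/-- Labelled version of a diagram with ordered short chords. -/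
abbrev Lab (m k : ℕ) := ((Fin k × Bool) ⊕ (Fin m × Bool)) ≃ Fin (2 * (m + k))

def T0 (m k : ℕ) (φ : Lab m k) : Prop :=
  (∀ i, (φ (Sum.inl (i, true))).val = (φ (Sum.inl (i, false))).val + 1) ∧
    StrictMono (fun i => φ (Sum.inl (i, false)))

def Cpt (m k : ℕ) (φ : Lab m k) (c : Fin m × Bool → Fin (k + 1)) : Prop :=
  ∀ i l, φ (Sum.inl (i, false)) < φ (Sum.inr l) ↔ i.val < (c l).val

lemma cpt_unique {m k : ℕ} {φ : Lab m k} {c c' : Fin m × Bool → Fin (k + 1)}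
    (h : Cpt m k φ c) (h' : Cpt m k φ c') : c = c' := by
  funext l
  apply Fin.ext
  rcases lt_trichotomy (c l).val (c' l).val with hl | hl | hl
  · have := (h ⟨(c l).val, by omega⟩ l).symm.trans (h' ⟨(c l).val, by omega⟩ l)
    simp at this; omega
  · exact hl
  · have := (h ⟨(c' l).val, by omega⟩ l).symm.trans (h' ⟨(c' l).val, by omega⟩ l)
    simp at this; omega

lemma cpt_exists {m k : ℕ} {φ : Lab m k} (h : T0 m k φ) : ∃ c, Cpt m k φ c := by
  classical
  refine ⟨fun l => ⟨(Finset.univ.filter fun i => φ (Sum.inl (i, false)) < φ (Sum.inr l)).card,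
    ?_⟩, ?_⟩
  · have := Finset.card_filter_le (Finset.univ : Finset (Fin k))
      (fun i => φ (Sum.inl (i, false)) < φ (Sum.inr l))
    simp at this ⊢
    omega
  · intro i l
    constructor
    · intro hi
      have : Finset.Iic i ⊆ (Finset.univ.filter fun i => φ (Sum.inl (i, false)) < φ (Sum.inr l)) := by
        intro i' hi'
        simp at hi' ⊢
        exact lt_of_le_of_lt (h.2.monotone hi') hi
      have := Finset.card_le_card this
      simp only [Fin.card_Iic] at this
      simpa using this
    · intro hi
      by_contra hn
      have : (Finset.univ.filter fun i => φ (Sum.inl (i, false)) < φ (Sum.inr l)) ⊆ Finset.Iio i := by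
        intro i' hi'
        simp at hi' ⊢
        by_contra hc
        exact hn (lt_of_le_of_lt (h.2.monotone (not_lt.1 hc)) hi')
      have := Finset.card_le_card this
      simp only [Fin.card_Iio] at this
      simp at hi
      omega

lemma pos_eq {m k : ℕ} {φ : Lab m k} {c : Fin m × Bool → Fin (k + 1)} (h : T0 m k φ)
    (hc : Cpt m k φ c) (i : Fin k) : (φ (Sum.inl (i, false))).val =
      2 * i.val + (Finset.univ.filter fun l => (c l).val ≤ i.val).card := by
  classical
  have h1 : (φ (Sum.inl (i, false))).val =
      (Finset.univ.filter fun x => φ x < φ (Sum.inl (i, false))).card := by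
    rw [← Fin.card_Iio, ← Finset.card_map φ.symm.toEmbedding]
    congr 1
    ext x
    simp [Finset.mem_map]
  rw [h1, Finset.card_filter, Fintype.sum_sum_type, Fintype.sum_prod_type]
  simp only [Fintype.sum_bool]
  congr 1
  · have : ∀ x : Fin k, ((if φ (Sum.inl (x, true)) < φ (Sum.inl (i, false)) then 1 else 0) +
        (if φ (Sum.inl (x, false)) < φ (Sum.inl (i, false)) then 1 else 0)) =
        if x < i then 2 else 0 := by
      intro x
      have e1 : φ (Sum.inl (x, false)) < φ (Sum.inl (i, false)) ↔ x < i := h.2.lt_iff_lt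
      have e2 : φ (Sum.inl (x, true)) < φ (Sum.inl (i, false)) ↔ x < i := by
        rw [← e1]
        constructor
        · intro hh
          have := h.1 x
          rw [Fin.lt_def] at hh ⊢
          omega
        · intro hh
          have h3 : φ (Sum.inl (x, true)) ≠ φ (Sum.inl (i, false)) := by
            intro hh; have := φ.injective hh; simp at this
          have := h.1 x
          rw [Fin.lt_def] at hh ⊢
          rw [Ne, Fin.ext_iff] at h3
          omega
      simp only [e1, e2]
      split_ifs <;> rfl
    rw [Finset.sum_congr rfl (fun x _ => this x), ← Finset.sum_filter, Finset.sum_const]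
    have : (Finset.univ.filter fun x => x < i) = Finset.Iio i := by ext; simp
    rw [this, Fin.card_Iio]; simp [mul_comm]
  · rw [Finset.card_filter]
    apply Finset.sum_congr rfl
    intro l _
    have : φ (Sum.inr l) < φ (Sum.inl (i, false)) ↔ (c l).val ≤ i.val := by
      rw [← not_lt, ← hc i l, not_lt]
      constructor
      · exact le_of_lt
      · intro hh
        refine lt_of_le_of_ne hh ?_
        intro hh; have := φ.injective hh; simp at this
    simp only [this]

def posFun {m k : ℕ} (c : Fin m × Bool → Fin (k + 1)) (e : Fin m × Bool ≃ Fin (2 * m)) :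
    (Fin k × Bool) ⊕ (Fin m × Bool) → ℕ
  | Sum.inl (i, b) => 2 * i.val + b.toNat + (Finset.univ.filter fun l => (c l).val ≤ i.val).card
  | Sum.inr l => 2 * (c l).val +
      (Finset.univ.filter fun l' => c l' < c l ∨ (c l' = c l ∧ e l' < e l)).card

lemma posFun_lt {m k : ℕ} (c : Fin m × Bool → Fin (k + 1)) (e : Fin m × Bool ≃ Fin (2 * m))
    (i : Fin k) (b : Bool) (l) (h : (c l).val ≤ i.val) :
    posFun c e (Sum.inr l) < posFun c e (Sum.inl (i, b)) := by
  simp only [posFun]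
  have : (Finset.univ.filter fun l' => c l' < c l ∨ (c l' = c l ∧ e l' < e l)) ⊂
      (Finset.univ.filter fun l => (c l).val ≤ i.val) := by
    rw [Finset.ssubset_iff_of_subset]
    · exact ⟨l, by simpa using h, by simp⟩
    · intro l' hl'
      simp at hl' ⊢
      rcases hl' with h' | h'
      · rw [Fin.lt_def] at h'; omega
      · rw [h'.1]; exact h
  have := Finset.card_lt_card this
  omega

lemma posFun_gt {m k : ℕ} (c : Fin m × Bool → Fin (k + 1)) (e : Fin m × Bool ≃ Fin (2 * m))
    (i : Fin k) (b : Bool) (l) (h : i.val < (c l).val) :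
    posFun c e (Sum.inl (i, b)) < posFun c e (Sum.inr l) := by
  simp only [posFun]
  have : (Finset.univ.filter fun l => (c l).val ≤ i.val) ⊆
     (Finset.univ.filter fun l' => c l' < c l ∨ (c l' = c l ∧ e l' < e l)) := by
    intro l' hl'
    simp at hl' ⊢
    left
    rw [Fin.lt_def]; omega
  have := Finset.card_le_card this
  have := Bool.toNat_le b
  omega

lemma posFun_rr {m k : ℕ} (c : Fin m × Bool → Fin (k + 1)) (e : Fin m × Bool ≃ Fin (2 * m))
    (l l') (h : c l < c l' ∨ (c l = c l' ∧ e l < e l')) :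
    posFun c e (Sum.inr l) < posFun c e (Sum.inr l') := by
  simp only [posFun]
  have : (Finset.univ.filter fun l' => c l' < c l ∨ (c l' = c l ∧ e l' < e l)) ⊂
      (Finset.univ.filter fun l'' => c l'' < c l' ∨ (c l'' = c l' ∧ e l'' < e l')) := by
    rw [Finset.ssubset_iff_of_subset]
    · exact ⟨l, by simpa using h, by simp⟩
    · intro l'' hl''
      simp only [Finset.mem_filter, Finset.mem_univ, true_and] at hl'' ⊢
      simp only [Fin.lt_def, Fin.ext_iff] at *
      omega
  have := Finset.card_lt_card this
  have : (c l).val ≤ (c l').val := by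
    rcases h with h | h
    · exact le_of_lt h
    · rw [h.1]
  omega

lemma posFun_inj {m k : ℕ} (c : Fin m × Bool → Fin (k + 1)) (e : Fin m × Bool ≃ Fin (2 * m)) :
    Function.Injective (posFun c e) := by
  have key : ∀ i b l, posFun c e (Sum.inl (i, b)) ≠ posFun c e (Sum.inr l) := by
    intro i b l
    rcases Nat.lt_or_ge i.val (c l).val with h | h
    · exact (posFun_gt c e i b l h).ne
    · exact (posFun_lt c e i b l h).ne'
  have mono : ∀ i i' : Fin k, i ≤ i' → (Finset.univ.filter fun l => (c l).val ≤ i.val).card ≤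
      (Finset.univ.filter fun l => (c l).val ≤ i'.val).card := by
    intro i i' h
    apply Finset.card_le_card
    intro l hl
    simp only [Finset.mem_filter, Finset.mem_univ, true_and] at hl ⊢
    exact hl.trans h
  rintro (⟨i, b⟩ | l) (⟨i', b'⟩ | l') h
  · have b1 := Bool.toNat_le b
    have b2 := Bool.toNat_le b'
    simp only [posFun] at h
    have : i = i' := by
      rcases lt_trichotomy i i' with hh | hh | hh
      · have := mono i i' hh.le
        rw [Fin.lt_def] at hh; omega
      · exact hh
      · have := mono i' i hh.le
        rw [Fin.lt_def] at hh; omega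
    subst this
    have : b.toNat = b'.toNat := by omega
    have : b = b' := by revert this; cases b <;> cases b' <;> simp
    rw [this]
  · exact absurd h (key _ _ _)
  · exact absurd h.symm (key _ _ _)
  · congr 1
    by_contra hne
    have hne' : e l ≠ e l' := fun hh => hne (e.injective hh)
    have : (c l < c l' ∨ (c l = c l' ∧ e l < e l')) ∨ (c l' < c l ∨ (c l' = c l ∧ e l' < e l)) := by
      simp only [Fin.lt_def, Ne, Fin.ext_iff] at *
      omega
    rcases this with hh | hh
    · exact (posFun_rr c e _ _ hh).ne h
    · exact (posFun_rr c e _ _ hh).ne' h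

lemma exists_lab {m k : ℕ} (c : Fin m × Bool → Fin (k + 1)) :
    ∃ φ : Lab m k, T0 m k φ ∧ Cpt m k φ c := by
  classical
  have e : Fin m × Bool ≃ Fin (2 * m) := Fintype.equivOfCardEq (by simp [mul_comm])
  have hb : ∀ x, posFun c e x < 2 * (m + k) := by
    rintro (⟨i, b⟩ | l)
    · simp only [posFun]
      have := Finset.card_filter_le Finset.univ (fun l => (c l).val ≤ i.val)
      have := Bool.toNat_le b
      simp at *
      omega
    · simp only [posFun]
      have h1 : (Finset.univ.filter fun l' => c l' < c l ∨ (c l' = c l ∧ e l' < e l)) ⊂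
        Finset.univ := by
        rw [Finset.ssubset_iff_of_subset (Finset.subset_univ _)]
        exact ⟨l, Finset.mem_univ _, by simp⟩
      have h1 := Finset.card_lt_card h1
      rw [Finset.card_univ] at h1
      simp only [Fintype.card_prod, Fintype.card_fin, Fintype.card_bool] at h1
      have := (c l).2
      omega
  let φ' : ((Fin k × Bool) ⊕ (Fin m × Bool)) → Fin (2 * (m + k)) := fun x => ⟨posFun c e x, hb x⟩
  have hbij : Function.Bijective φ' := by
    rw [Fintype.bijective_iff_injective_and_card]
    constructor
    · intro x y h
      apply posFun_inj c e
      simpa [φ'] using h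
    · simp; ring
  refine ⟨Equiv.ofBijective φ' hbij, ⟨?_, ?_⟩, ?_⟩
  · intro i
    simp [φ', posFun]; ring
  · intro i i' h
    have : posFun c e (Sum.inl (i, false)) < posFun c e (Sum.inl (i', false)) := by
      simp only [posFun]
      have := Finset.card_le_card (s := (Finset.univ.filter fun l => (c l).val ≤ i.val))
        (t := (Finset.univ.filter fun l => (c l).val ≤ i'.val)) (by
          intro l hl
          simp only [Finset.mem_filter, Finset.mem_univ, true_and] at hl ⊢
          exact hl.trans h.le)
      rw [Fin.lt_def] at h
      omega
    simpa [φ', Fin.lt_def] using this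
  · intro i l
    change posFun c e (Sum.inl (i, false)) < posFun c e (Sum.inr l) ↔ _
    constructor
    · intro h
      by_contra hn
      exact absurd h (posFun_lt c e i false l (not_lt.1 hn)).not_gt
    · exact posFun_gt c e i false l

/-- relabelling of the long vertices -/
def rel {m k : ℕ} (φ : Lab m k) (σ : Equiv.Perm (Fin m × Bool)) : Lab m k :=
  (Equiv.Perm.sumCongr (1 : Equiv.Perm (Fin k × Bool)) σ).trans φ

@[simp] lemma rel_inl {m k : ℕ} (φ : Lab m k) (σ : Equiv.Perm (Fin m × Bool)) (x) :
    rel φ σ (Sum.inl x) = φ (Sum.inl x) := by simp [rel]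

@[simp] lemma rel_inr {m k : ℕ} (φ : Lab m k) (σ : Equiv.Perm (Fin m × Bool)) (x) :
    rel φ σ (Sum.inr x) = φ (Sum.inr (σ x)) := by simp [rel]

lemma rel_inj {m k : ℕ} (φ : Lab m k) : Function.Injective (rel φ) := by
  intro σ τ h
  ext1 x
  have : rel φ σ (Sum.inr x) = rel φ τ (Sum.inr x) := by rw [h]
  simpa using this

lemma T0_rel {m k : ℕ} {φ : Lab m k} (h : T0 m k φ) (σ) : T0 m k (rel φ σ) := by
  simpa [T0] using h

lemma exists_rel {m k : ℕ} (φ φ' : Lab m k)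
    (h : ∀ x, φ (Sum.inl x) = φ' (Sum.inl x)) : ∃ σ, φ' = rel φ σ := by
  have := Equiv.Perm.mem_sumCongrHom_range_of_perm_mapsTo_inl (σ := φ'.trans φ.symm) (by
    rintro _ ⟨x, rfl⟩
    exact ⟨x, by simp [← h]⟩)
  obtain ⟨⟨τ, σ⟩, hσ⟩ := this
  refine ⟨σ, ?_⟩
  ext1 x
  rcases x with x | x
  · simp [h]
  · have := congrArg (fun s => φ (s (Sum.inr x))) hσ
    simp at this
    simp [this]

lemma T0_agree {m k : ℕ} {φ φ' : Lab m k} (h : T0 m k φ) (h' : T0 m k φ')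
    (hh : ∀ i, φ (Sum.inl (i, false)) = φ' (Sum.inl (i, false))) :
    ∀ x, φ (Sum.inl x) = φ' (Sum.inl x) := by
  rintro ⟨i, b⟩
  cases b
  · exact hh i
  · apply Fin.ext
    rw [h.1, h'.1, hh]

lemma card_fiber {m k : ℕ} (c : Fin m × Bool → Fin (k + 1)) :
    Nat.card {φ : Lab m k // T0 m k φ ∧ Cpt m k φ c} =
      ∏ i, (Fintype.card {l // c l = i}).factorial := by
  classical
  rw [← DomMulAct.stabilizer_card c, ← Nat.card_eq_fintype_card]
  obtain ⟨φ, h0, hc⟩ := exists_lab c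
  symm
  apply Nat.card_eq_of_bijective (fun σ : {g : Equiv.Perm (Fin m × Bool) // c ∘ ⇑g = c} =>
    (⟨rel φ σ.1, T0_rel h0 _, by
      intro i l
      have := congrFun σ.2 l
      simp only [Function.comp] at this
      rw [rel_inl, rel_inr, hc, this]⟩ : {φ : Lab m k // T0 m k φ ∧ Cpt m k φ c}))
  constructor
  · intro σ τ h
    apply Subtype.ext
    apply rel_inj φ
    simpa using h
  · rintro ⟨φ', h0', hc'⟩
    obtain ⟨σ, hσ⟩ := exists_rel φ φ' (T0_agree h0 h0' (by
      intro i
      apply Fin.ext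
      rw [pos_eq h0 hc, pos_eq h0' hc']))
    refine ⟨⟨σ, ?_⟩, ?_⟩
    · subst hσ
      apply cpt_unique (φ := rel φ σ) _ hc'
      intro i l
      rw [rel_inl, rel_inr, hc]; rfl
    · simp [hσ]

end ChordBubbles
end

section
namespace ChordBubbles

def flip {α : Type*} (x : α × Bool) : α × Bool := (x.1, !x.2)

@[simp] lemma flip_flip {α : Type*} (x : α × Bool) : flip (flip x) = x := by
  simp [flip]

lemma flip_ne {α : Type*} (x : α × Bool) : flip x ≠ x := by
  intro h
  have := congrArg Prod.snd h
  simp [flip] at this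

def sw {m k : ℕ} : Equiv.Perm ((Fin k × Bool) ⊕ (Fin m × Bool)) :=
  Function.Involutive.toPerm (Sum.map flip flip) (by rintro (x | x) <;> simp)

@[simp] lemma sw_inl {m k : ℕ} (x) : (sw (m := m) (k := k)) (Sum.inl x) = Sum.inl (flip x) := rfl
@[simp] lemma sw_inr {m k : ℕ} (x) : (sw (m := m) (k := k)) (Sum.inr x) = Sum.inr (flip x) := rfl

def diag {m k : ℕ} (φ : Lab m k) : Equiv.Perm (Fin (2 * (m + k))) := (φ.symm.trans sw).trans φ

lemma diag_apply {m k : ℕ} (φ : Lab m k) (x) : diag φ (φ x) = φ (sw x) := by simp [diag]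

def GoodC {m k : ℕ} (c : Fin m × Bool → Fin (k + 1)) : Prop := ∀ j, c (j, false) ≠ c (j, true)

lemma GoodC.ne {m k : ℕ} {c : Fin m × Bool → Fin (k + 1)} (h : GoodC c) (l) : c l ≠ c (flip l) := by
  obtain ⟨j, b⟩ := l
  cases b
  · exact h j
  · exact (h j).symm

def Sep {m k : ℕ} (φ : Lab m k) : Prop := ∀ l, φ (Sum.inr l) < φ (Sum.inr (flip l)) →
  ∃ i, φ (Sum.inr l) < φ (Sum.inl (i, false)) ∧ φ (Sum.inl (i, false)) < φ (Sum.inr (flip l))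

lemma sep_iff {m k : ℕ} {φ : Lab m k} {c : Fin m × Bool → Fin (k + 1)} (hc : Cpt m k φ c) :
    Sep φ ↔ GoodC c := by
  constructor
  · intro h j hj
    have key : ∀ l, c l = c (flip l) → φ (Sum.inr l) < φ (Sum.inr (flip l)) → False := by
      intro l hl h1
      obtain ⟨i, h2, h3⟩ := h l h1
      rw [hc, ← hl, ← hc] at h3
      exact absurd h2 h3.not_gt
    rcases lt_trichotomy (φ (Sum.inr (j, false))) (φ (Sum.inr (j, true))) with h1 | h1 | h1
    · exact key (j, false) hj h1
    · have := φ.injective h1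
      simp at this
    · exact key (j, true) hj.symm h1
  · intro h l hl
    have hne := h.ne l
    have hlt : (c l).val < (c (flip l)).val := by
      by_contra hn
      have h1 : (c (flip l)).val < (c l).val := by
        rw [Ne, Fin.ext_iff] at hne; omega
      have h2 := (hc ⟨(c (flip l)).val, by omega⟩ l).2 h1
      have h3 := (hc ⟨(c (flip l)).val, by omega⟩ (flip l)).1 (h2.trans hl)
      simp at h3
    refine ⟨⟨(c l).val, by omega⟩, ?_, ?_⟩
    · have h3 := (hc ⟨(c l).val, by omega⟩ l).not.2 (by simp)
      refine lt_of_le_of_ne (not_lt.1 h3) ?_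
      intro h; have := φ.injective h; simp at this
    · exact (hc _ _).2 hlt

section toDiag
variable {m k : ℕ} {φ : Lab m k}

lemma isDiagram_diag (φ : Lab m k) : IsDiagram (m + k) (diag φ) := by
  constructor
  · intro v
    obtain ⟨x, rfl⟩ := φ.surjective v
    rw [diag_apply, diag_apply]
    rcases x with x | x <;> simp
  · intro v
    obtain ⟨x, rfl⟩ := φ.surjective v
    rw [diag_apply, Ne, φ.injective.eq_iff]
    rcases x with x | x <;> simp [flip_ne]

lemma diag_short_iff (h : T0 m k φ) (hs : Sep φ) (v) :
    (diag φ v).val = v.val + 1 ↔ ∃ i, v = φ (Sum.inl (i, false)) := by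
  constructor
  · intro hv
    obtain ⟨x, rfl⟩ := φ.surjective v
    rw [diag_apply] at hv
    rcases x with ⟨i, b⟩ | l
    · cases b
      · exact ⟨i, rfl⟩
      · have := h.1 i
        simp [flip] at hv
        omega
    · rw [sw_inr] at hv
      obtain ⟨i, h1, h2⟩ := hs l (by rw [Fin.lt_def]; omega)
      rw [Fin.lt_def] at h1 h2
      omega
  · rintro ⟨i, rfl⟩
    rw [diag_apply, sw_inl]
    exact h.1 i

lemma shortChords_diag (h : T0 m k φ) (hs : Sep φ) : shortChords (m + k) (diag φ) = k := by
  have : Nat.card (Fin k) = k := by simp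
  rw [shortChords]
  conv_rhs => rw [← this]
  symm
  apply Nat.card_eq_of_bijective (fun i : Fin k => (⟨φ (Sum.inl (i, false)),
    (diag_short_iff h hs _).2 ⟨i, rfl⟩⟩ : {i : Fin (2 * (m + k)) // (diag φ i).val = i.val + 1}))
  constructor
  · intro i j hij
    simpa using hij
  · rintro ⟨v, hv⟩
    obtain ⟨i, hi⟩ := (diag_short_iff h hs _).1 hv
    exact ⟨i, by simp [hi]⟩

lemma shortEnd_inl (h : T0 m k φ) (x) : ShortEnd (m + k) (diag φ) (φ (Sum.inl x)) := by
  obtain ⟨i, b⟩ := x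
  rw [ShortEnd, diag_apply, sw_inl]
  have := h.1 i
  cases b
  · left; exact this
  · right; exact this.symm

lemma crystallized_diag (h : T0 m k φ) (hs : Sep φ) : Crystallized (m + k) (diag φ) := by
  have key : ∀ a b, IsBubble (m + k) (diag φ) a b → ∀ i : Fin (2 * (m + k)), i < diag φ i →
    a ≤ i.val → i.val ≤ b → a ≤ (diag φ i).val → (diag φ i).val ≤ b → False := by
    intro a b hab v hv h1 h2 h3 h4
    have hn := hab.2.2.1 v h1 h2
    obtain ⟨x, rfl⟩ := φ.surjective v
    rcases x with x | l
    · exact hn (shortEnd_inl h x)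
    · rw [diag_apply] at *
      obtain ⟨i, h5, h6⟩ := hs l hv
      rw [sw_inr] at *
      rw [Fin.lt_def] at h5 h6
      exact hab.2.2.1 (φ (Sum.inl (i, false))) (by omega) (by omega) (shortEnd_inl h _)
  intro a b hab v h1 h2 ⟨h3, h4⟩
  rcases lt_trichotomy v (diag φ v) with hv | hv | hv
  · exact key a b hab v hv h1 h2 h3 h4
  · exact (isDiagram_diag φ).2 v hv.symm
  · have := (isDiagram_diag φ).1 v
    exact key a b hab (diag φ v) (by rwa [this]) h3 h4 (by rwa [this]) (by rwa [this])

end toDiag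

lemma exists_bubble (n : ℕ) (f : Equiv.Perm (Fin (2 * n))) (v w : Fin (2 * n)) (hvw : v ≤ w)
    (h : ∀ u, v ≤ u → u ≤ w → ¬ ShortEnd n f u) :
    ∃ a b, IsBubble n f a b ∧ a ≤ v.val ∧ w.val ≤ b := by
  classical
  have hA : ∃ a, ∀ u : Fin (2 * n), a ≤ u.val → u ≤ v → ¬ ShortEnd n f u :=
    ⟨v.val, fun u h1 h2 => h u h1 (h2.trans hvw)⟩
  have hB : ∃ d, w.val + d + 1 = 2 * n ∨ ∃ j : Fin (2 * n), j.val = w.val + d + 1 ∧ ShortEnd n f j :=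
    ⟨2 * n - 1 - w.val, Or.inl (by omega)⟩
  set a := Nat.find hA with ha
  set d := Nat.find hB with hd
  have ha1 := Nat.find_spec hA
  have hd1 := Nat.find_spec hB
  rw [← ha] at ha1
  rw [← hd] at hd1
  have hav : a ≤ v.val := Nat.find_min' hA (fun u h1 h2 => h u h1 (h2.trans hvw))
  have hdb : w.val + d < 2 * n := by
    rcases hd1 with h1 | ⟨j, h1, _⟩ <;> omega
  refine ⟨a, w.val + d, ⟨?_, hdb, ?_, ?_, ?_⟩, hav, by omega⟩
  · rw [Fin.le_def] at hvw; omega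
  · intro u h1 h2 h3
    rcases le_or_gt u v with h4 | h4
    · exact ha1 u h1 h4 h3
    rcases le_or_gt u w with h5 | h5
    · exact h u h4.le h5 h3
    rw [Fin.lt_def] at h5
    have := Nat.find_min hB (m := u.val - w.val - 1) (by omega)
    exact this (Or.inr ⟨u, by omega, h3⟩)
  · by_contra hn
    push Not at hn
    have := Nat.find_min hA (m := a - 1) (by omega)
    apply this
    intro u h1 h2
    rcases eq_or_lt_of_le h1 with h3 | h3
    · exact hn.2 u (by omega)
    · exact ha1 u (by omega) h2
  · rcases hd1 with h1 | ⟨j, h1, h2⟩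
    · exact Or.inl h1
    · exact Or.inr ⟨j, h1, h2⟩

lemma flip_sym {n : ℕ} {f : Equiv.Perm (Fin (2 * n))} (hf : IsDiagram n f) (v) :
    ShortEnd n f (f v) ↔ ShortEnd n f v := by
  rw [ShortEnd, ShortEnd, hf.1]
  omega

lemma card_low {n : ℕ} {f : Equiv.Perm (Fin (2 * n))} (hf : IsDiagram n f) :
    (Finset.univ.filter fun v => v < f v).card = n := by
  classical
  have h1 : (Finset.univ.filter fun v => v < f v).card =
      (Finset.univ.filter fun v => f v < v).card := by
    rw [← Finset.card_map f.toEmbedding]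
    congr 1
    ext v
    simp only [Finset.mem_map, Finset.mem_filter, Finset.mem_univ, true_and]
    constructor
    · rintro ⟨w, hw, rfl⟩
      simpa [hf.1] using hw
    · intro h
      exact ⟨f v, by rwa [hf.1], by simp [hf.1]⟩
  have h2 := Finset.card_filter_add_card_filter_not (s := (Finset.univ : Finset (Fin (2 * n))))
    (fun v => v < f v)
  have h3 : (Finset.univ.filter fun v => ¬ v < f v) = (Finset.univ.filter fun v => f v < v) := by
    ext v
    simp only [Finset.mem_filter, Finset.mem_univ, true_and, not_lt]
    exact ⟨fun h => lt_of_le_of_ne h (hf.2 v), le_of_lt⟩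
  rw [h3, ← h1] at h2
  simp at h2
  omega

lemma exists_lab_of_diag {m k : ℕ} {f : Equiv.Perm (Fin (2 * (m + k)))}
    (hf : IsDiagram (m + k) f) (hc : Crystallized (m + k) f) (hk : shortChords (m + k) f = k) :
    ∃ φ : Lab m k, T0 m k φ ∧ Sep φ ∧ diag φ = f := by
  classical
  set S : Finset (Fin (2 * (m + k))) := Finset.univ.filter fun v => (f v).val = v.val + 1 with hS
  have hSk : S.card = k := by
    rw [shortChords, Nat.card_eq_fintype_card, Fintype.card_subtype] at hk
    exact hk
  set Lw : Finset (Fin (2 * (m + k))) := (Finset.univ.filter fun v => v < f v) \ S with hLw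
  have hSs : S ⊆ Finset.univ.filter fun v => v < f v := by
    intro v hv
    simp only [hS, Finset.mem_filter, Finset.mem_univ, true_and, Fin.lt_def] at hv ⊢
    omega
  have hLm : Lw.card = m := by
    have := Finset.card_sdiff_add_card_eq_card hSs
    rw [card_low hf, hSk] at this
    exact Nat.add_right_cancel this
  let d := S.orderEmbOfFin hSk
  let e := Lw.orderEmbOfFin hLm
  have hd : ∀ i, (f (d i)).val = (d i).val + 1 := by
    intro i
    have h : d i ∈ S := S.orderEmbOfFin_mem hSk i
    generalize d i = v at h
    simpa [hS] using h
  have he : ∀ j, e j < f (e j) ∧ ¬ (f (e j)).val = (e j).val + 1 := by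
    intro i
    have h : e i ∈ Lw := Lw.orderEmbOfFin_mem hLm i
    generalize e i = v at h
    simpa [hLw, hS] using h
  let g : ((Fin k × Bool) ⊕ (Fin m × Bool)) → Fin (2 * (m + k)) := fun x => match x with
    | Sum.inl (i, b) => if b then f (d i) else d i
    | Sum.inr (j, b) => if b then f (e j) else e j
  have g1 : ∀ i, g (Sum.inl (i, false)) = d i := fun i => rfl
  have g2 : ∀ i, g (Sum.inl (i, true)) = f (d i) := fun i => rfl
  have g3 : ∀ i, g (Sum.inr (i, false)) = e i := fun i => rfl
  have g4 : ∀ i, g (Sum.inr (i, true)) = f (e i) := fun i => rfl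
  clear_value g
  have gs : ∀ x, g (sw x) = f (g x) := by
    rintro (⟨i, b⟩ | ⟨i, b⟩) <;> cases b <;> simp [flip, g1, g2, g3, g4, hf.1]
  have hde : ∀ i j, d i ≠ e j := by
    intro i j h
    apply (he j).2
    rw [← h]; exact hd i
  have hdlt : ∀ i, d i < f (d i) := by
    intro i; have := hd i; rw [Fin.lt_def]; omega
  have hnot : ∀ v w, v < f v → w < f w → v ≠ f w := by
    intro v w h1 h2 h
    rw [h, hf.1] at h1
    exact absurd h1 h2.not_gt
  have ginj : Function.Injective g := by
    rintro (⟨i, b⟩ | ⟨i, b⟩) (⟨i', b'⟩ | ⟨i', b'⟩) h <;> cases b <;> cases b' <;>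
      simp only [g1, g2, g3, g4] at h
    · rw [d.injective h]
    · exact absurd h (hnot _ _ (hdlt _) (hdlt _))
    · exact absurd h.symm (hnot _ _ (hdlt _) (hdlt _))
    · rw [d.injective (f.injective h)]
    · exact absurd h (hde _ _)
    · exact absurd h (hnot _ _ (hdlt _) (he _).1)
    · exact absurd h.symm (hnot _ _ (he _).1 (hdlt _))
    · exact absurd (f.injective h) (hde _ _)
    · exact absurd h.symm (hde _ _)
    · exact absurd h (hnot _ _ (he _).1 (hdlt _))
    · exact absurd h.symm (hnot _ _ (hdlt _) (he _).1)
    · exact absurd (f.injective h).symm (hde _ _)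
    · rw [e.injective h]
    · exact absurd h (hnot _ _ (he _).1 (he _).1)
    · exact absurd h.symm (hnot _ _ (he _).1 (he _).1)
    · rw [e.injective (f.injective h)]
  have gbij : Function.Bijective g := by
    rw [Fintype.bijective_iff_injective_and_card]
    exact ⟨ginj, by simp; ring⟩
  have hSend : ∀ u, ShortEnd (m + k) f u → ∃ i, u = d i ∨ u = f (d i) := by
    intro u hu
    have hr : ∀ w ∈ S, ∃ i, d i = w := by
      intro w hw
      have : w ∈ Set.range (S.orderEmbOfFin hSk) := by
        rw [Finset.range_orderEmbOfFin]; exact hw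
      exact this
    rcases hu with hu | hu
    · obtain ⟨i, hi⟩ := hr u (by simpa [hS] using hu)
      exact ⟨i, Or.inl hi.symm⟩
    · obtain ⟨i, hi⟩ := hr (f u) (by simpa [hS, hf.1] using hu.symm)
      exact ⟨i, Or.inr (by rw [hi, hf.1])⟩
  refine ⟨Equiv.ofBijective g gbij, ⟨?_, ?_⟩, ?_, ?_⟩
  · intro i
    rw [Equiv.ofBijective_apply, Equiv.ofBijective_apply, g1, g2]
    exact hd i
  · intro i i' h
    simp only [Equiv.ofBijective_apply, g1]
    exact d.strictMono h
  · intro l hl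
    change g (Sum.inr l) < g (Sum.inr (flip l)) at hl
    change ∃ i, g (Sum.inr l) < g (Sum.inl (i, false)) ∧
      g (Sum.inl (i, false)) < g (Sum.inr (flip l))
    have hgl : g (Sum.inr (flip l)) = f (g (Sum.inr l)) := by rw [← gs]; rfl
    rw [hgl] at hl ⊢
    have hns : ¬ ShortEnd (m + k) f (g (Sum.inr l)) := by
      intro h
      obtain ⟨i, hi | hi⟩ := hSend _ h
      · rw [← g1] at hi; have := ginj hi; simp at this
      · rw [← g2] at hi; have := ginj hi; simp at this
    set v := g (Sum.inr l) with hv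
    by_contra hcon
    push Not at hcon
    simp only [g1] at hcon
    obtain ⟨a, b, hab, h1, h2⟩ := exists_bubble (m + k) f v (f v) hl.le (by
      intro u h1 h2 hu
      have hv1 : u ≠ v := by rintro rfl; exact hns hu
      have hv2 : u ≠ f v := by rintro rfl; exact hns ((flip_sym hf _).1 hu)
      have h1' := lt_of_le_of_ne h1 hv1.symm
      have h2' := lt_of_le_of_ne h2 hv2
      obtain ⟨i, rfl | rfl⟩ := hSend u hu
      · exact absurd h2' (hcon i h1').not_gt
      · have h3 : v < d i := by
          have h4 := hd i
          have h5 : v ≠ d i := by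
            intro h; apply hv2; rw [h]
          rw [Fin.lt_def] at h1' ⊢
          rw [Ne, Fin.ext_iff] at h5
          omega
        exact absurd ((hdlt i).trans h2') (hcon i h3).not_gt)
    rw [Fin.lt_def] at hl
    exact hc a b hab v h1 (by omega) ⟨by omega, h2⟩
  · ext1 v
    obtain ⟨x, rfl⟩ := (Equiv.ofBijective g gbij).surjective v
    rw [diag_apply]
    exact gs x

lemma strictMono_unique' {k N : ℕ} {f g : Fin k → Fin N} (hf : StrictMono f) (hg : StrictMono g)
    (h : Set.range f = Set.range g) : f = g := by
  exact StrictMono.range_inj hf hg |>.1 h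

lemma card_comm (m : ℕ) : Nat.card {σ : Equiv.Perm (Fin m × Bool) // ∀ l, σ (flip l) = flip (σ l)} =
    m.factorial * 2 ^ m := by
  classical
  have h1 : Nat.card (Equiv.Perm (Fin m) × (Fin m → Bool)) = m.factorial * 2 ^ m := by
    rw [Nat.card_eq_fintype_card, Fintype.card_prod, Fintype.card_perm, Fintype.card_fun]
    simp
  rw [← h1]
  symm
  have hinv : ∀ p : Equiv.Perm (Fin m) × (Fin m → Bool), Function.Bijective
      (fun l : Fin m × Bool => (p.1 l.1, xor l.2 (p.2 l.1))) := by
    intro p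
    rw [← Finite.injective_iff_bijective]
    rintro ⟨j, b⟩ ⟨j', b'⟩ h
    simp at h
    obtain ⟨rfl, h⟩ := h
    simpa using h
  apply Nat.card_eq_of_bijective (fun p : Equiv.Perm (Fin m) × (Fin m → Bool) =>
    (⟨Equiv.ofBijective _ (hinv p), by
      rintro ⟨j, b⟩
      simp [flip]⟩ : {σ : Equiv.Perm (Fin m × Bool) // ∀ l, σ (flip l) = flip (σ l)}))
  constructor
  · rintro ⟨p, β⟩ ⟨p', β'⟩ h
    simp only [Subtype.mk.injEq] at h
    have h2 : ∀ j, (p j, β j) = (p' j, β' j) := by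
      intro j
      have := congrArg (fun s : Equiv.Perm (Fin m × Bool) => s (j, false)) h
      simpa using this
    ext1
    · ext1 j; exact congrArg Prod.fst (h2 j)
    · funext j; exact congrArg Prod.snd (h2 j)
  · rintro ⟨σ, hσ⟩
    have hb : Function.Bijective (fun j => (σ (j, false)).1) := by
      rw [← Finite.injective_iff_bijective]
      intro j j' h
      simp only at h
      by_cases h2 : (σ (j, false)).2 = (σ (j', false)).2
      · have := σ.injective (Prod.ext h h2)
        simpa using this
      · have : σ (j, false) = flip (σ (j', false)) := by
          apply Prod.ext
          · exact h
          · simp only [flip]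
            revert h2
            cases (σ (j, false)).2 <;> cases (σ (j', false)).2 <;> simp
        rw [← hσ] at this
        have := σ.injective this
        simp [flip] at this
    refine ⟨(Equiv.ofBijective _ hb, fun j => (σ (j, false)).2), ?_⟩
    apply Subtype.ext
    ext1 ⟨j, b⟩
    cases b
    · simp
    · have := hσ (j, false)
      simp only [flip, Bool.not_false] at this
      simp [this]

lemma card_fiber_diag {m k : ℕ} {f : Equiv.Perm (Fin (2 * (m + k)))}
    (hf : IsDiagram (m + k) f) (hc : Crystallized (m + k) f) (hk : shortChords (m + k) f = k) :
    Nat.card {φ : Lab m k // (T0 m k φ ∧ Sep φ) ∧ diag φ = f} = m.factorial * 2 ^ m := by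
  classical
  rw [← card_comm]
  obtain ⟨φ, h0, hs, hd⟩ := exists_lab_of_diag hf hc hk
  have hflip : ∀ x, f (φ (Sum.inr x)) = φ (Sum.inr (flip x)) := by
    intro x; rw [← hd, diag_apply]; rfl
  symm
  apply Nat.card_eq_of_bijective
    (fun σ : {σ : Equiv.Perm (Fin m × Bool) // ∀ l, σ (flip l) = flip (σ l)} =>
    (⟨rel φ σ.1, ⟨T0_rel h0 _, by
      intro l hl
      simp only [rel_inl, rel_inr, σ.2] at hl ⊢
      exact hs _ hl⟩, by
      ext1 v
      obtain ⟨x, rfl⟩ := (rel φ σ.1).surjective v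
      rw [diag_apply]
      rcases x with x | x
      · rw [sw_inl, rel_inl, rel_inl, ← hd, diag_apply]; rfl
      · rw [sw_inr, rel_inr, rel_inr, hflip, σ.2]⟩ :
        {φ : Lab m k // (T0 m k φ ∧ Sep φ) ∧ diag φ = f}))
  constructor
  · intro σ τ h
    apply Subtype.ext
    apply rel_inj φ
    simpa using h
  · rintro ⟨φ', ⟨h0', hs'⟩, hd'⟩
    have hD := strictMono_unique' h0.2 h0'.2 (by
      ext v
      have e1 := diag_short_iff h0 hs v
      have e2 := diag_short_iff h0' hs' v
      rw [hd] at e1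
      rw [hd'] at e2
      rw [Set.mem_range, Set.mem_range]
      simp only [eq_comm (b := v)]
      rw [← e1, ← e2])
    obtain ⟨σ, hσ⟩ := exists_rel φ φ' (T0_agree h0 h0' (fun i => congrFun hD i))
    refine ⟨⟨σ, ?_⟩, ?_⟩
    · intro l
      have h1 : f (φ' (Sum.inr l)) = φ' (Sum.inr (flip l)) := by
        rw [← hd', diag_apply]; rfl
      rw [hσ, rel_inr, rel_inr, hflip] at h1
      have := φ.injective h1
      simpa using this.symm
    · simp [hσ]

lemma card_fib_sum {α β : Type*} [Finite α] [Fintype β] (p : α → Prop) (r : α → β → Prop)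
    (q : β → Prop) [DecidablePred q]
    (h1 : ∀ a, p a → ∃ b, q b ∧ r a b) (h2 : ∀ a b b', r a b → r a b' → b = b')  :
    Nat.card {a // p a} = ∑ b with q b, Nat.card {a // p a ∧ r a b} := by
  classical
  have := Fintype.ofFinite α
  have e1 : ∀ s : α → Prop, Nat.card {a // s a} = ∑ a, if s a then 1 else 0 := by
    intro s
    rw [Nat.card_eq_fintype_card, Fintype.card_subtype, Finset.card_filter]
  simp only [e1]
  rw [Finset.sum_comm]
  apply Finset.sum_congr rfl
  intro a _
  by_cases hp : p a
  · obtain ⟨b, hb1, hb2⟩ := h1 a hp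
    rw [Finset.sum_eq_single b]
    · simp [hp, hb2]
    · intro b' _ hne
      rw [if_neg]
      rintro ⟨_, h⟩
      exact hne (h2 a _ _ h hb2)
    · intro h
      simp [hb1] at h
  · simp [hp]

open Classical in
theorem R_formula (m k : ℕ) : R (m + k) k * (m.factorial * 2 ^ m) =
    ∑ c : Fin m × Bool → Fin (k + 1) with GoodC c,
      ∏ i, (Fintype.card {l // c l = i}).factorial := by
  have h1 := card_fib_sum (α := Lab m k) (fun φ => T0 m k φ ∧ Sep φ) (fun φ c => Cpt m k φ c) GoodC
    (by
      rintro φ ⟨h0, hs⟩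
      obtain ⟨c, hc⟩ := cpt_exists h0
      exact ⟨c, (sep_iff hc).1 hs, hc⟩) (fun φ c c' h h' => cpt_unique h h')
  have h2 := card_fib_sum (α := Lab m k) (fun φ => T0 m k φ ∧ Sep φ) (fun φ f => diag φ = f)
    (fun f => IsDiagram (m + k) f ∧ Crystallized (m + k) f ∧ shortChords (m + k) f = k)
    (by
      rintro φ ⟨h0, hs⟩
      exact ⟨diag φ, ⟨isDiagram_diag φ, crystallized_diag h0 hs, shortChords_diag h0 hs⟩, rfl⟩)
    (fun φ c c' h h' => h.symm.trans h')
  have h3 : ∀ f ∈ (Finset.univ.filter fun f => IsDiagram (m + k) f ∧ Crystallized (m + k) f ∧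
      shortChords (m + k) f = k), Nat.card {φ : Lab m k // (T0 m k φ ∧ Sep φ) ∧ diag φ = f} =
        m.factorial * 2 ^ m := by
    intro f hf
    simp only [Finset.mem_filter, Finset.mem_univ, true_and] at hf
    exact card_fiber_diag hf.1 hf.2.1 hf.2.2
  rw [Finset.sum_congr rfl h3, Finset.sum_const, smul_eq_mul] at h2
  rw [R, Nat.card_eq_fintype_card, Fintype.card_subtype, ← h2, h1]
  apply Finset.sum_congr rfl
  intro c hc
  simp only [Finset.mem_filter, Finset.mem_univ, true_and] at hc
  rw [← card_fiber c]
  apply Nat.card_congr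
  apply Equiv.subtypeEquivRight
  intro φ
  constructor
  · rintro ⟨⟨h, _⟩, h'⟩; exact ⟨h, h'⟩
  · rintro ⟨h, h'⟩; exact ⟨⟨h, (sep_iff h').2 hc⟩, h'⟩

end ChordBubbles
end

section
namespace ChordBubbles
open MeasureTheory Set

noncomputable def tp (m : ℕ) (x : ℝ) : ℝ := if 0 < x then x ^ m else 0

lemma tp_nonneg (m : ℕ) (x : ℝ) : 0 ≤ tp m x := by
  unfold tp; split_ifs with h
  · positivity
  · exact le_rfl

@[fun_prop] lemma measurable_tp (m : ℕ) : Measurable (tp m) := by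
  unfold tp
  exact Measurable.ite measurableSet_Ioi (by fun_prop) measurable_const

lemma tp_mul (m : ℕ) {c : ℝ} (hc : 0 < c) (x : ℝ) : tp m (c * x) = c ^ m * tp m x := by
  unfold tp
  simp only [mul_pos_iff_of_pos_left hc]
  split_ifs
  · rw [mul_pow]
  · simp

lemma tp_mono (m : ℕ) {x y : ℝ} (h : x ≤ y) : tp m x ≤ tp m y := by
  unfold tp
  split_ifs with h1 h2 h2
  · gcongr
  · linarith
  · positivity
  · exact le_rfl

noncomputable def HH (m k : ℕ) (c : ℝ) : ENNReal :=
  ∫⁻ v : Fin k → ℝ, ENNReal.ofReal (tp m (c - ∑ i, v i ^ 2))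

lemma HH_scale (m k : ℕ) {c : ℝ} (hc : 0 < c) :
    HH m k c = ENNReal.ofReal (c ^ ((m : ℝ) + k / 2)) * HH m k 1 := by
  set r := Real.sqrt c with hr
  have hr0 : 0 < r := Real.sqrt_pos.2 hc
  have hrc : r ^ 2 = c := Real.sq_sqrt hc.le
  have h1 := Measure.map_addHaar_smul (volume : Measure (Fin k → ℝ)) hr0.ne'
  have h2 : ∫⁻ v : Fin k → ℝ, ENNReal.ofReal (tp m (c - ∑ i, v i ^ 2))
      ∂(Measure.map (fun x => r • x) volume) =
      ∫⁻ v : Fin k → ℝ, ENNReal.ofReal (c ^ m) * ENNReal.ofReal (tp m (1 - ∑ i, v i ^ 2)) := by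
    rw [lintegral_map (by fun_prop) (by fun_prop)]
    congr 1
    funext v
    rw [← ENNReal.ofReal_mul (by positivity), ← tp_mul m hc]
    congr 2
    simp only [Pi.smul_apply, smul_eq_mul, mul_pow, ← Finset.mul_sum, hrc]
    ring
  rw [h1, lintegral_smul_measure, lintegral_const_mul _ (by fun_prop)] at h2
  simp only [Module.finrank_fin_fun, smul_eq_mul] at h2
  rw [HH, HH]
  have h3 : ENNReal.ofReal (r ^ k) * ENNReal.ofReal |(r ^ k)⁻¹| = 1 := by
    rw [← ENNReal.ofReal_mul (by positivity), abs_of_pos (by positivity),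
      mul_inv_cancel₀ (by positivity), ENNReal.ofReal_one]
  calc _ = ENNReal.ofReal (r ^ k) * (ENNReal.ofReal |(r ^ k)⁻¹| *
      ∫⁻ v : Fin k → ℝ, ENNReal.ofReal (tp m (c - ∑ i, v i ^ 2))) := by
        rw [← mul_assoc, h3, one_mul]
    _ = _ := by
      rw [h2, ← mul_assoc, ← ENNReal.ofReal_mul (by positivity)]
      congr 2
      rw [Real.rpow_add hc, Real.rpow_natCast, mul_comm, hr, Real.sqrt_eq_rpow]
      congr 1
      rw [← Real.rpow_natCast (c ^ (1 / 2 : ℝ)) k, ← Real.rpow_mul hc.le]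
      congr 1
      ring

lemma lint_gamma {a r : ℝ} (ha : 0 ≤ a) (hr : 0 < r) :
    ∫⁻ t in Ioi (0 : ℝ), ENNReal.ofReal (Real.exp (-(r * t)) * t ^ a) =
      ENNReal.ofReal (Real.Gamma (a + 1) / r ^ (a + 1)) := by
  have h := Real.integral_rpow_mul_exp_neg_mul_Ioi (a := a + 1) (by linarith) hr
  have h2 := integrableOn_rpow_mul_exp_neg_mul_rpow (p := 1) (s := a) (b := r) (by linarith)
    (by norm_num) hr
  rw [← ofReal_integral_eq_lintegral_ofReal]
  · congr 1
    rw [one_div, Real.inv_rpow hr.le, add_sub_cancel_right] at h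
    rw [div_eq_inv_mul, ← h]
    congr 1; funext t; ring
  · have h3 : (fun t : ℝ => Real.exp (-(r * t)) * t ^ a) =
        fun x : ℝ => x ^ a * Real.exp (-r * x ^ (1 : ℝ)) := by
      funext t
      rw [Real.rpow_one]
      ring_nf
    rw [h3]
    exact h2
  · refine (ae_restrict_iff' measurableSet_Ioi).2 (Filter.Eventually.of_forall ?_)
    intro t ht
    have : (0 : ℝ) < t := ht
    simp only [Pi.zero_apply]; positivity

lemma lint_pi {k : ℕ} (μ : Measure ℝ) [SigmaFinite μ] (f : Fin k → ℝ → ℝ)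
    (hf : ∀ i, Integrable (f i) μ) (h0 : ∀ i, 0 ≤ᵐ[μ] f i) (h0' : 0 ≤ᵐ[Measure.pi (fun _ : Fin k => μ)]
      fun x => ∏ i, f i (x i)) :
    ∫⁻ x, ENNReal.ofReal (∏ i, f i (x i)) ∂(Measure.pi (fun _ : Fin k => μ)) =
      ∏ i, ∫⁻ x, ENNReal.ofReal (f i x) ∂μ := by
  rw [← ofReal_integral_eq_lintegral_ofReal (Integrable.fintype_prod hf) h0',
    integral_fintype_prod_eq_prod, ENNReal.ofReal_prod_of_nonneg]
  · apply Finset.prod_congr rfl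
    intro i _
    rw [ofReal_integral_eq_lintegral_ofReal (hf i) (h0 i)]
  · intro i _
    exact integral_nonneg_of_ae (h0 i)

lemma lint_gauss (k : ℕ) : ∫⁻ v : Fin k → ℝ, ENNReal.ofReal (Real.exp (-∑ i, v i ^ 2)) =
    ENNReal.ofReal (Real.pi ^ ((k : ℝ) / 2)) := by
  have h1 : Integrable (fun x : ℝ => Real.exp (-x ^ 2)) := by
    simpa using integrable_exp_neg_mul_sq (b := 1) one_pos
  have h2 : ∫ x : ℝ, Real.exp (-x ^ 2) = Real.sqrt Real.pi := by
    simpa using integral_gaussian 1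
  have := lint_pi (k := k) volume (fun _ x => Real.exp (-x ^ 2)) (fun _ => h1)
    (fun _ => Filter.Eventually.of_forall fun x => (Real.exp_pos _).le)
    (Filter.Eventually.of_forall fun x => by simp only [Pi.zero_apply]; positivity)
  rw [← ofReal_integral_eq_lintegral_ofReal h1
    (Filter.Eventually.of_forall fun x => (Real.exp_pos _).le), h2] at this
  simp only [← Real.exp_sum, Finset.sum_neg_distrib] at this
  rw [volume_pi, this, Finset.prod_const, ← ENNReal.ofReal_pow (by positivity)]
  congr 1
  rw [Real.sqrt_eq_rpow, ← Real.rpow_natCast, ← Real.rpow_mul Real.pi_pos.le]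
  congr 1
  simp; ring

lemma lint_tp (m : ℕ) : ∫⁻ t : ℝ, ENNReal.ofReal (Real.exp (-t) * tp m t) =
    ENNReal.ofReal (m.factorial) := by
  have h := lint_gamma (a := m) (r := 1) (by positivity) one_pos
  rw [Real.Gamma_nat_eq_factorial] at h
  simp only [Real.one_rpow, div_one] at h
  rw [← h, ← lintegral_indicator measurableSet_Ioi]
  congr 1
  funext t
  rw [indicator_apply]
  unfold tp
  by_cases ht : 0 < t
  · simp [ht]
  · simp [ht]

lemma HH_one (m k : ℕ) : HH m k 1 * ENNReal.ofReal (Real.Gamma ((m : ℝ) + k / 2 + 1)) =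
    ENNReal.ofReal (Real.pi ^ ((k : ℝ) / 2) * m.factorial) := by
  have h1 : ∫⁻ r in Ioi (0 : ℝ), ENNReal.ofReal (Real.exp (-r)) * HH m k r =
      HH m k 1 * ENNReal.ofReal (Real.Gamma ((m : ℝ) + k / 2 + 1)) := by
    have h := lint_gamma (a := (m : ℝ) + k / 2) (r := 1) (by positivity) one_pos
    simp only [one_mul, Real.one_rpow, div_one] at h
    rw [← h, ← lintegral_const_mul _ (by fun_prop)]
    apply setLIntegral_congr_fun measurableSet_Ioi
    intro r hr
    simp only
    rw [HH_scale m k hr, ENNReal.ofReal_mul (Real.exp_pos _).le]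
    ring
  rw [← h1]
  have h2 : ∀ r ∈ Ioi (0 : ℝ), ENNReal.ofReal (Real.exp (-r)) * HH m k r =
      ∫⁻ v : Fin k → ℝ, ENNReal.ofReal (Real.exp (-r) * tp m (r - ∑ i, v i ^ 2)) := by
    intro r _
    rw [HH, ← lintegral_const_mul _ (by fun_prop)]
    simp only [ENNReal.ofReal_mul (Real.exp_pos _).le]
  have h3 : ∫⁻ r in Ioi (0 : ℝ), ENNReal.ofReal (Real.exp (-r)) * HH m k r =
      ∫⁻ r : ℝ, ∫⁻ v : Fin k → ℝ, ENNReal.ofReal (Real.exp (-r) * tp m (r - ∑ i, v i ^ 2)) := by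
    rw [setLIntegral_congr_fun measurableSet_Ioi h2, ← lintegral_indicator measurableSet_Ioi]
    congr 1
    funext r
    rw [indicator_apply]
    split_ifs with h
    · rfl
    · symm
      simp only [mem_Ioi, not_lt] at h
      have : ∀ v : Fin k → ℝ, tp m (r - ∑ i, v i ^ 2) = 0 := by
        intro v
        have : 0 ≤ ∑ i, v i ^ 2 := Finset.sum_nonneg fun i _ => sq_nonneg _
        rw [tp, if_neg (by linarith)]
      simp [this]
  rw [h3, lintegral_lintegral_swap (by fun_prop)]
  have h4 : ∀ v : Fin k → ℝ, ∫⁻ r : ℝ, ENNReal.ofReal (Real.exp (-r) * tp m (r - ∑ i, v i ^ 2)) =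
      ENNReal.ofReal (Real.exp (-∑ i, v i ^ 2)) * ENNReal.ofReal (m.factorial) := by
    intro v
    rw [← lint_tp m, ← lintegral_const_mul _ (by fun_prop),
      ← lintegral_sub_right_eq_self (fun t : ℝ => ENNReal.ofReal (Real.exp (-∑ i, v i ^ 2)) *
        ENNReal.ofReal (Real.exp (-t) * tp m t)) (∑ i, v i ^ 2)]
    congr 1
    funext r
    rw [← ENNReal.ofReal_mul (Real.exp_pos _).le, ← mul_assoc, ← Real.exp_add]
    congr 3
    ring
  simp only [h4]
  rw [lintegral_mul_const _ (by fun_prop), lint_gauss, ENNReal.ofReal_mul (by positivity)]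

lemma HH_one' (m k : ℕ) : HH m k 1 =
    ENNReal.ofReal (Real.pi ^ ((k : ℝ) / 2) * m.factorial / Real.Gamma ((m : ℝ) + k / 2 + 1)) := by
  have hG : 0 < Real.Gamma ((m : ℝ) + k / 2 + 1) := Real.Gamma_pos_of_pos (by positivity)
  rw [ENNReal.ofReal_div_of_pos hG, ← HH_one, ENNReal.mul_div_cancel_right]
  · simpa using hG
  · exact ENNReal.ofReal_ne_top

/-- total weight on the cone -/
noncomputable def DD (m k : ℕ) (B : ℝ) : ENNReal :=
  ∫⁻ s : Fin (k + 1) → ℝ, if 0 < ∑ i, s i then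
    ENNReal.ofReal (Real.exp (-∑ i, s i) * tp m (B * (∑ i, s i) ^ 2 - ∑ i, s i ^ 2)) else 0

end ChordBubbles
end

section
namespace ChordBubbles
open MeasureTheory Set

lemma sum_good_prod (m k : ℕ) (s : Fin (k + 1) → ℝ) :
    open Classical in
    ∑ c : Fin m × Bool → Fin (k + 1) with GoodC c, ∏ l, s (c l) =
      ((∑ i, s i) ^ 2 - ∑ i, s i ^ 2) ^ m := by
  classical
  have h1 : (∑ i, s i) ^ 2 - ∑ i, s i ^ 2 =
      ∑ p ∈ (Finset.univ : Finset (Fin (k + 1) × Fin (k + 1))).filter (fun p => p.1 ≠ p.2),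
        s p.1 * s p.2 := by
    rw [eq_comm, eq_sub_iff_add_eq, sq, Finset.sum_mul_sum, ← Finset.sum_product',
      Finset.univ_product_univ,
      ← Finset.sum_filter_add_sum_filter_not Finset.univ
        (fun p : Fin (k + 1) × Fin (k + 1) => p.1 ≠ p.2) (fun x => s x.1 * s x.2)]
    congr 1
    symm
    refine Finset.sum_bij' (M := ℝ) (fun (p : Fin (k + 1) × Fin (k + 1)) _ => p.1)
      (fun (i : Fin (k + 1)) _ => (i, i)) ?_ ?_ ?_ ?_ ?_
    · simp
    · simp
    · rintro ⟨a, b⟩ h; simp at h; simp [h]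
    · simp
    · rintro ⟨a, b⟩ h; simp at h; simp [h, sq]
  rw [h1, ← Fin.prod_const, Finset.prod_univ_sum]
  refine Finset.sum_bij' (fun c _ j => (c (j, false), c (j, true)))
    (fun p _ l => if l.2 then (p l.1).2 else (p l.1).1) ?_ ?_ ?_ ?_ ?_
  · intro c hc
    simp only [Finset.mem_filter, Finset.mem_univ, true_and] at hc
    simpa [Fintype.mem_piFinset, GoodC] using hc
  · intro p hp
    simp only [Fintype.mem_piFinset, Finset.mem_filter, Finset.mem_univ, true_and] at hp
    simp only [Finset.mem_filter, Finset.mem_univ, true_and]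
    intro j
    simpa using hp j
  · intro c hc
    funext ⟨j, b⟩
    cases b <;> simp
  · intro p hp
    funext j
    simp
  · intro c hc
    rw [Fintype.prod_prod_type]
    apply Finset.prod_congr rfl
    intro j _
    rw [Fintype.prod_bool, mul_comm]

lemma lint_pow (d : ℕ) : ∫⁻ t in Ioi (0 : ℝ), ENNReal.ofReal (Real.exp (-t) * t ^ d) =
    (d.factorial : ENNReal) := by
  have h := lint_gamma (a := d) (r := 1) (by positivity) one_pos
  rw [Real.Gamma_nat_eq_factorial] at h
  simpa using h

lemma integrable_pow (d : ℕ) : Integrable (fun t : ℝ => Real.exp (-t) * t ^ d)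
    (volume.restrict (Ioi 0)) := by
  refine ⟨by fun_prop, ?_⟩
  rw [hasFiniteIntegral_iff_ofReal]
  · rw [lint_pow]; exact ENNReal.natCast_lt_top _
  · refine (ae_restrict_iff' measurableSet_Ioi).2 (Filter.Eventually.of_forall ?_)
    intro t ht
    have : (0 : ℝ) < t := ht
    simp only [Pi.zero_apply]; positivity

lemma ae_orthant (k : ℕ) : ∀ᵐ s ∂(Measure.pi (fun _ : Fin k => volume.restrict (Ioi (0 : ℝ)))),
    ∀ i, 0 < s i := by
  rw [ae_all_iff]
  intro i
  have h : ∀ᵐ t ∂(volume.restrict (Ioi (0 : ℝ))), 0 < t :=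
    ae_restrict_mem measurableSet_Ioi
  exact (Measure.tendsto_eval_ae_ae (i := i)).eventually h

noncomputable def II (m k : ℕ) : ENNReal :=
  ∫⁻ s, ENNReal.ofReal (Real.exp (-∑ i, s i) * ((∑ i, s i) ^ 2 - ∑ i, s i ^ 2) ^ m)
    ∂(Measure.pi (fun _ : Fin (k + 1) => volume.restrict (Ioi (0 : ℝ))))

lemma II_eq (m k : ℕ) : (((R (m + k) k * (m.factorial * 2 ^ m) : ℕ)) : ENNReal) = II m k := by
  classical
  rw [R_formula]
  have key : ∀ c : Fin m × Bool → Fin (k + 1),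
      ∫⁻ s, ENNReal.ofReal (Real.exp (-∑ i, s i) * ∏ l, s (c l))
        ∂(Measure.pi (fun _ : Fin (k + 1) => volume.restrict (Ioi (0 : ℝ)))) =
      ((∏ i, (Fintype.card {l // c l = i}).factorial : ℕ) : ENNReal) := by
    intro c
    have h := lint_pi (k := k + 1) (volume.restrict (Ioi (0 : ℝ)))
      (fun i t => Real.exp (-t) * t ^ (Fintype.card {l // c l = i}))
      (fun i => integrable_pow _)
      (fun i => by
        refine (ae_restrict_iff' measurableSet_Ioi).2 (Filter.Eventually.of_forall ?_)
        intro t ht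
        have : (0 : ℝ) < t := ht
        simp only [Pi.zero_apply]; positivity)
      (by
        filter_upwards [ae_orthant (k + 1)] with s hs
        simp only [Pi.zero_apply]
        exact Finset.prod_nonneg fun i _ => mul_nonneg (Real.exp_pos _).le (pow_nonneg (hs i).le _))
    simp only [lint_pow] at h
    push_cast
    rw [← h]
    congr 1
    funext s
    congr 1
    rw [Finset.prod_mul_distrib, ← Real.exp_sum, Finset.sum_neg_distrib]
    congr 1
    rw [← Fintype.prod_fiberwise c]
    apply Finset.prod_congr rfl
    intro i _
    rw [Finset.prod_congr rfl (g := fun _ => s i) (fun l _ => by rw [l.2]), Finset.prod_const,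
      Finset.card_univ]
  rw [II]
  push_cast
  simp only [Nat.cast_prod] at key
  simp only [← key]
  rw [← lintegral_finsetSum]
  · apply lintegral_congr_ae
    filter_upwards [ae_orthant (k + 1)] with s hs
    rw [← ENNReal.ofReal_sum_of_nonneg, ← Finset.mul_sum, sum_good_prod]
    intro c _
    exact mul_nonneg (Real.exp_pos _).le (Finset.prod_nonneg fun l _ => (hs _).le)
  · intro c _
    fun_prop

end ChordBubbles
end

section
namespace ChordBubbles
open MeasureTheory Set

noncomputable def DDf (m k : ℕ) (B : ℝ) (s : Fin (k + 1) → ℝ) : ENNReal :=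
  if 0 < ∑ i, s i then
    ENNReal.ofReal (Real.exp (-∑ i, s i) * tp m (B * (∑ i, s i) ^ 2 - ∑ i, s i ^ 2)) else 0

lemma measurable_DDf (m k : ℕ) (B : ℝ) : Measurable (DDf m k B) := by
  unfold DDf
  refine Measurable.ite ?_ (by fun_prop) measurable_const
  exact measurableSet_lt measurable_const (by fun_prop)

lemma DD_eq (m k : ℕ) (B : ℝ) : DD m k B = ∫⁻ s, DDf m k B s := rfl

lemma II_eq' (m k : ℕ) (hk : 1 ≤ k) : II m k =
    ∫⁻ s in Set.univ.pi (fun _ : Fin (k + 1) => Ioi (0 : ℝ)), DDf m k 1 s := by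
  rw [volume_pi, Measure.restrict_pi_pi, II]
  apply lintegral_congr_ae
  filter_upwards [ae_orthant (k + 1)] with s hs
  have h0 : 0 < ∑ i, s i := Finset.sum_pos (fun i _ => hs i) Finset.univ_nonempty
  rw [DDf, if_pos h0, tp, if_pos, one_mul]
  rw [one_mul, sub_pos, sq, Finset.sum_mul]
  have h1 : ∀ i, s i ^ 2 < s i * ∑ j, s j := by
    intro i
    rw [sq]
    refine mul_lt_mul_of_pos_left ?_ (hs i)
    obtain ⟨j, hj⟩ : ∃ j : Fin (k + 1), j ≠ i := by
      have : Nontrivial (Fin (k + 1)) := Fin.nontrivial_iff_two_le.2 (by omega)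
      exact exists_ne i
    exact Finset.single_lt_sum hj (Finset.mem_univ _) (Finset.mem_univ _) (hs j)
      (fun l _ _ => (hs l).le)
  exact Finset.sum_lt_sum_of_nonempty Finset.univ_nonempty fun i _ => h1 i

lemma II_le (m k : ℕ) (hk : 1 ≤ k) : II m k ≤ DD m k 1 := by
  rw [II_eq' m k hk, DD_eq]
  exact setLIntegral_le_lintegral _ _

/-- the shear -/
noncomputable def shw (k : ℕ) (j : Fin (k + 1)) : Fin (k + 1) → ℝ :=
  fun i => (1 / (k : ℝ)) * ((if i = j then 1 else 0) - 1 / ((k : ℝ) + 1))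

lemma shear_mp (k : ℕ) (j : Fin (k + 1)) :
    MeasurePreserving (fun s : Fin (k + 1) → ℝ => s + (∑ i, s i) • shw k j) := by
  refine ⟨by fun_prop, ?_⟩
  let f : Module.Dual ℝ (Fin (k + 1) → ℝ) := ∑ i, LinearMap.proj i
  have hf : ∀ s, f s = ∑ i, s i := fun s => by simp [f]
  have hdet : LinearMap.det (LinearMap.transvection f (shw k j)) = 1 := by
    rw [LinearMap.transvection.det, hf]
    simp only [shw, ← Finset.mul_sum, Finset.sum_sub_distrib]
    simp
    right
    field_simp
    ring
  have := Measure.map_linearMap_addHaar_eq_smul_addHaar (volume : Measure (Fin (k + 1) → ℝ))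
    (f := LinearMap.transvection f (shw k j)) (by rw [hdet]; exact one_ne_zero)
  rw [hdet] at this
  simp only [inv_one, abs_one, ENNReal.ofReal_one, one_smul] at this
  have h2 : (fun s : Fin (k + 1) → ℝ => s + (∑ i, s i) • shw k j) =
      ⇑(LinearMap.transvection f (shw k j)) := by
    funext s
    simp [LinearMap.transvection.apply, hf]
  rw [h2]
  exact this

lemma bad_le (m k : ℕ) (hk : 1 ≤ k) (j : Fin (k + 1)) :
    ∫⁻ s in {s : Fin (k + 1) → ℝ | s j ≤ 0}, DDf m k 1 s ≤
      DD m k (1 - 1 / ((k : ℝ) * (k + 1))) := by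
  have hk' : (0 : ℝ) < k := by exact_mod_cast hk
  rw [DD_eq, ← (shear_mp k j).lintegral_comp (measurable_DDf _ _ _)]
  refine le_trans (setLIntegral_mono' ?_ ?_) (setLIntegral_le_lintegral _ _)
  · exact measurableSet_le (by fun_prop) measurable_const
  intro s hs
  simp only [mem_ofPred_eq] at hs
  set S := ∑ i, s i with hS
  have hw0 : ∑ i, shw k j i = 0 := by
    simp only [shw, ← Finset.mul_sum, Finset.sum_sub_distrib]
    simp
    right
    field_simp
    ring
  have hsw : ∑ i, s i * shw k j i = (1 / (k : ℝ)) * (s j - S / (k + 1)) := by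
    have : ∀ i, s i * shw k j i = (1 / (k : ℝ)) * ((if i = j then s i else 0) - s i / (k + 1)) := by
      intro i
      rw [shw]
      split_ifs <;> ring
    simp only [this, ← Finset.mul_sum, Finset.sum_sub_distrib, ← Finset.sum_div, ← hS]
    simp
  have hww : ∑ i, shw k j i ^ 2 = 1 / ((k : ℝ) * (k + 1)) := by
    have : ∀ i, shw k j i ^ 2 = (1 / (k : ℝ)^2) * ((if i = j then 1 - 2 / ((k : ℝ) + 1) else 0)
      + 1 / ((k : ℝ) + 1)^2) := by
      intro i
      rw [shw]
      split_ifs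
      · field_simp
        ring
      · field_simp
        ring
    simp only [this, ← Finset.mul_sum, Finset.sum_add_distrib]
    simp
    field_simp
    ring
  have hS' : ∑ i, (s + S • shw k j) i = S := by
    simp only [Pi.add_apply, Pi.smul_apply, smul_eq_mul, Finset.sum_add_distrib, ← Finset.mul_sum,
      hw0, ← hS]
    ring
  have hQ : ∑ i, (s + S • shw k j) i ^ 2 = ∑ i, s i ^ 2 + 2 * S * ((1 / (k : ℝ)) * (s j - S / (k + 1)))
      + S ^ 2 * (1 / ((k : ℝ) * (k + 1))) := by
    rw [← hsw, ← hww]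
    simp only [Finset.mul_sum, ← Finset.sum_add_distrib]
    apply Finset.sum_congr rfl
    intro i _
    simp only [Pi.add_apply, Pi.smul_apply, smul_eq_mul]
    ring
  unfold DDf
  rw [hS', hQ, ← hS]
  split_ifs with hpos
  · apply ENNReal.ofReal_le_ofReal
    refine mul_le_mul_of_nonneg_left (tp_mono m ?_) (Real.exp_pos _).le
    have h1 : 2 * S * ((1 / (k : ℝ)) * (s j - S / (k + 1))) = 2 * S * s j / k -
      2 * S ^ 2 * (1 / ((k : ℝ) * (k + 1))) := by
      field_simp
    have h2 : 2 * S * s j / k ≤ 0 := by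
      apply div_nonpos_of_nonpos_of_nonneg _ hk'.le
      nlinarith
    rw [h1]
    nlinarith
  · exact le_rfl

lemma DD_le (m k : ℕ) (hk : 1 ≤ k) :
    DD m k 1 ≤ II m k + (k + 1) * DD m k (1 - 1 / ((k : ℝ) * (k + 1))) := by
  rw [II_eq' m k hk]
  have hcov : (Set.univ.pi (fun _ : Fin (k + 1) => Ioi (0 : ℝ))) ∪
      ⋃ j, {s : Fin (k + 1) → ℝ | s j ≤ 0} = Set.univ := by
    apply Set.eq_univ_of_forall
    intro s
    by_cases h : ∀ i, 0 < s i
    · left; simpa using h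
    · right
      push Not at h
      simpa using h
  calc DD m k 1 = ∫⁻ s in (Set.univ.pi (fun _ : Fin (k + 1) => Ioi (0 : ℝ))) ∪
      ⋃ j, {s : Fin (k + 1) → ℝ | s j ≤ 0}, DDf m k 1 s := by
        rw [hcov, setLIntegral_univ, DD_eq]
    _ ≤ _ := lintegral_union_le _ _ _
    _ ≤ _ := by
      gcongr
      refine (lintegral_iUnion_le _ _).trans ?_
      rw [tsum_fintype]
      refine (Finset.sum_le_sum fun j _ => bad_le m k hk j).trans ?_
      simp

lemma exists_rot (k : ℕ) : ∃ T : (Fin (k + 1) → ℝ) → (Fin (k + 1) → ℝ),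
    MeasurePreserving T ∧ ∀ s, ∑ i, T s i ^ 2 = ∑ i, s i ^ 2 ∧
      ∑ i, s i = Real.sqrt (k + 1) * T s 0 := by
  have hK : (0 : ℝ) < Real.sqrt (k + 1) := Real.sqrt_pos.2 (by positivity)
  let e : EuclideanSpace ℝ (Fin (k + 1)) := WithLp.toLp 2 (fun _ => 1 / Real.sqrt (k + 1))
  let e0 : EuclideanSpace ℝ (Fin (k + 1)) := EuclideanSpace.single 0 1
  have he : ‖e‖ = ‖e0‖ := by
    rw [EuclideanSpace.norm_eq, PiLp.norm_single]
    simp only [e]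
    simp
    rw [mul_inv_cancel₀ hK.ne']
  let T := ((ℝ ∙ (e - e0))ᗮ).reflection
  have hT : T e = e0 := Submodule.reflection_sub he
  refine ⟨fun s => WithLp.ofLp (T (WithLp.toLp 2 s)), ?_, ?_⟩
  · exact (PiLp.volume_preserving_ofLp _).comp
      (T.measurePreserving.comp (PiLp.volume_preserving_toLp _))
  · intro s
    constructor
    · have h := T.norm_map (WithLp.toLp 2 s)
      rw [← sq_eq_sq₀ (norm_nonneg _) (norm_nonneg _), EuclideanSpace.real_norm_sq_eq,
        EuclideanSpace.real_norm_sq_eq] at h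
      exact h
    · have h := T.inner_map_map e (WithLp.toLp 2 s)
      rw [hT] at h
      simp only [e0, e, EuclideanSpace.inner_single_left, PiLp.inner_apply] at h
      simp [← Finset.sum_mul] at h
      show ∑ i, s i = Real.sqrt (k + 1) * (T (WithLp.toLp 2 s)).ofLp 0
      rw [h, mul_comm (∑ i, s i), ← mul_assoc, mul_inv_cancel₀ hK.ne', one_mul]

lemma DD_val (m k : ℕ) {B : ℝ} (hB : 1 < B * (k + 1)) :
    DD m k B = ENNReal.ofReal ((B * (k + 1) - 1) ^ ((m : ℝ) + k / 2)) * (HH m k 1 *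
      ENNReal.ofReal ((2 * m + k).factorial / Real.sqrt (k + 1) ^ (2 * m + k + 1))) := by
  obtain ⟨T, hTm, hT⟩ := exists_rot k
  have hK : (0 : ℝ) < Real.sqrt (k + 1) := Real.sqrt_pos.2 (by positivity)
  have hK2 : Real.sqrt ((k : ℝ) + 1) ^ 2 = k + 1 := Real.sq_sqrt (by positivity)
  set r := Real.sqrt ((k : ℝ) + 1)
  let g : ℝ × (Fin k → ℝ) → ENNReal := fun p => if 0 < p.1 then
    ENNReal.ofReal (Real.exp (-(r * p.1)) * tp m ((B * (k + 1) - 1) * p.1 ^ 2 - ∑ i, p.2 i ^ 2)) else 0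
  have hg : Measurable g := by
    refine Measurable.ite ?_ (by fun_prop) measurable_const
    exact measurableSet_lt measurable_const (by fun_prop)
  have h1 : ∀ s, DDf m k B s = g (MeasurableEquiv.piFinSuccAbove (fun _ => ℝ) 0 (T s)) := by
    intro s
    obtain ⟨hQ, hS⟩ := hT s
    have e1 : (MeasurableEquiv.piFinSuccAbove (fun _ => ℝ) 0 (T s)).1 = T s 0 := rfl
    have e2 : ∀ i, (MeasurableEquiv.piFinSuccAbove (fun _ => ℝ) 0 (T s)).2 i = T s i.succ :=
      fun i => rfl
    simp only [g, e1, e2, DDf]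
    rw [hS, ← hQ]
    simp only [mul_pos_iff_of_pos_left hK]
    congr 4
    rw [Fin.sum_univ_succ, mul_pow, hK2]
    ring
  rw [DD_eq]
  simp only [h1]
  rw [hTm.lintegral_comp (f := fun s => g (MeasurableEquiv.piFinSuccAbove (fun _ => ℝ) 0 s))
      (hg.comp (MeasurableEquiv.measurable _)),
    (volume_preserving_piFinSuccAbove (fun _ : Fin (k + 1) => ℝ) 0).lintegral_comp hg,
    Measure.volume_eq_prod, lintegral_prod _ hg.aemeasurable]
  have hb : 0 < B * (k + 1) - 1 := by linarith
  have h2 : ∀ x : ℝ, ∫⁻ y, g (x, y) = indicator (Ioi 0) (fun x => 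
      ENNReal.ofReal ((B * (k + 1) - 1) ^ ((m : ℝ) + k / 2)) * (HH m k 1 *
      ENNReal.ofReal (Real.exp (-(r * x)) * x ^ ((2 * m + k : ℕ) : ℝ)))) x := by
    intro x
    rw [indicator_apply]
    simp only [g, mem_Ioi]
    split_ifs with hx
    · simp only [ENNReal.ofReal_mul (Real.exp_pos _).le]
      rw [lintegral_const_mul _ (by fun_prop)]
      have : ∫⁻ v : Fin k → ℝ, ENNReal.ofReal (tp m ((B * (k + 1) - 1) * x ^ 2 - ∑ i, v i ^ 2)) =
        HH m k ((B * (k + 1) - 1) * x ^ 2) := rfl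
      rw [this, HH_scale m k (by positivity), Real.mul_rpow hb.le (by positivity),
        ENNReal.ofReal_mul (by positivity)]
      have : (x ^ 2) ^ ((m : ℝ) + k / 2) = x ^ ((2 * m + k : ℕ) : ℝ) := by
        rw [← Real.rpow_natCast x 2, ← Real.rpow_mul hx.le]
        congr 1
        push_cast; ring
      rw [this]
      ring
    · simp
  simp only [h2]
  rw [lintegral_indicator measurableSet_Ioi, lintegral_const_mul _ (by fun_prop),
    lintegral_const_mul _ (by fun_prop), lint_gamma (by positivity) hK,
    Real.Gamma_nat_eq_factorial]
  congr 4
  rw [← Real.rpow_natCast]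
  push_cast; rfl

end ChordBubbles
end

section
namespace ChordBubbles
open MeasureTheory Set

noncomputable def FF (n k : ℕ) : ℝ :=
  2 ^ n * Real.pi ^ ((k : ℝ) / 2) / Real.sqrt Real.pi * Real.Gamma ((n : ℝ) - k / 2 + 1 / 2) *
    (k : ℝ) ^ ((n : ℝ) - k / 2) / ((k : ℝ) + 1) ^ ((n : ℝ) - k / 2 + 1 / 2)

lemma FF_pos {n k : ℕ} (hk : 1 ≤ k) (hkn : k ≤ n) : 0 < FF n k := by
  have h1 : (0 : ℝ) < k := by exact_mod_cast hk
  have h2 : (k : ℝ) ≤ n := by exact_mod_cast hkn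
  have : 0 < Real.Gamma ((n : ℝ) - k / 2 + 1 / 2) := Real.Gamma_pos_of_pos (by linarith)
  unfold FF
  positivity

lemma FF_eq (m k : ℕ) : ((k : ℝ)) ^ ((m : ℝ) + k / 2) *
    (Real.pi ^ ((k : ℝ) / 2) * m.factorial / Real.Gamma ((m : ℝ) + k / 2 + 1) *
      ((2 * m + k).factorial / Real.sqrt (k + 1) ^ (2 * m + k + 1))) =
    FF (m + k) k * (m.factorial * 2 ^ m) := by
  have hG : 0 < Real.Gamma ((m : ℝ) + k / 2 + 1) := Real.Gamma_pos_of_pos (by positivity)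
  have h := Real.Gamma_mul_Gamma_add_half ((m : ℝ) + k / 2 + 1 / 2)
  have e1 : 2 * ((m : ℝ) + k / 2 + 1 / 2) = ((2 * m + k : ℕ) : ℝ) + 1 := by push_cast; ring
  have e2 : (m : ℝ) + k / 2 + 1 / 2 + 1 / 2 = (m : ℝ) + k / 2 + 1 := by ring
  have e3 : (1 : ℝ) - (((2 * m + k : ℕ) : ℝ) + 1) = -((2 * m + k : ℕ) : ℝ) := by ring
  rw [e1, e2, Real.Gamma_nat_eq_factorial, e3, Real.rpow_neg two_pos.le, Real.rpow_natCast] at h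
  have hpi : 0 < Real.sqrt Real.pi := Real.sqrt_pos.2 Real.pi_pos
  have e4 : ((2 * m + k).factorial : ℝ) = Real.Gamma ((m : ℝ) + k / 2 + 1 / 2) *
      Real.Gamma ((m : ℝ) + k / 2 + 1) * 2 ^ (2 * m + k) / Real.sqrt Real.pi := by
    rw [h]; field_simp
  have e5 : Real.sqrt ((k : ℝ) + 1) ^ (2 * m + k + 1) =
      ((k : ℝ) + 1) ^ ((m : ℝ) + k / 2 + 1 / 2) := by
    rw [Real.sqrt_eq_rpow, ← Real.rpow_natCast, ← Real.rpow_mul (by positivity)]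
    congr 1; push_cast; ring
  have e6 : ((m + k : ℕ) : ℝ) - k / 2 = m + k / 2 := by push_cast; ring
  rw [e4, e5, FF, e6]
  have : (0 : ℝ) < ((k : ℝ) + 1) ^ ((m : ℝ) + k / 2 + 1 / 2) := by positivity
  field_simp
  ring

lemma DD_val' (m k : ℕ) {B : ℝ} (hk : 1 ≤ k) (hB : 1 < B * (k + 1)) :
    DD m k B = ENNReal.ofReal (((B * (k + 1) - 1) / k) ^ ((m : ℝ) + k / 2) * 
      (FF (m + k) k * (m.factorial * 2 ^ m))) := by
  have hb : 0 < B * (k + 1) - 1 := by linarith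
  have h1 : (0 : ℝ) < k := by exact_mod_cast hk
  have hG : 0 < Real.Gamma ((m : ℝ) + k / 2 + 1) := Real.Gamma_pos_of_pos (by positivity)
  rw [DD_val m k hB, HH_one', ← FF_eq, Real.div_rpow hb.le h1.le, ← ENNReal.ofReal_mul (by positivity),
    ← ENNReal.ofReal_mul (by positivity)]
  congr 1
  have hkp : (0 : ℝ) < (k : ℝ) ^ ((m : ℝ) + k / 2) := by positivity
  rw [← mul_assoc (_ / _) ((k : ℝ) ^ ((m : ℝ) + k / 2)), div_mul_cancel₀ _ hkp.ne']

lemma R_le (n k : ℕ) (hk : 1 ≤ k) (hkn : k ≤ n) : (R n k : ℝ) ≤ FF n k := by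
  obtain ⟨m, rfl⟩ : ∃ m, n = m + k := ⟨n - k, by omega⟩
  have h1 : (0 : ℝ) < k := by exact_mod_cast hk
  have h := II_le m k hk
  have hF := FF_pos hk hkn
  rw [← II_eq, DD_val' m k hk (by linarith)] at h
  have e : (1 * ((k : ℝ) + 1) - 1) / k = 1 := by field_simp; ring
  rw [e, Real.one_rpow, one_mul] at h
  have e8 : ((R (m + k) k * (m.factorial * 2 ^ m) : ℕ) : ENNReal) =
    ENNReal.ofReal (((R (m + k) k * (m.factorial * 2 ^ m) : ℕ) : ℝ)) := by simp
  rw [e8, ENNReal.ofReal_le_ofReal_iff (by positivity)] at h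
  push_cast at h
  refine le_of_mul_le_mul_right h (by positivity)

lemma le_R (n k : ℕ) (hk : 2 ≤ k) (hkn : k ≤ n) :
    FF n k * (1 - (k + 1) * (1 - 1 / (k : ℝ) ^ 2) ^ ((n : ℝ) - k / 2)) ≤ R n k := by
  obtain ⟨m, rfl⟩ : ∃ m, n = m + k := ⟨n - k, by omega⟩
  have h1 : (2 : ℝ) ≤ k := by exact_mod_cast hk
  have h := DD_le m k (by omega)
  have hF := FF_pos (by omega) hkn
  have hB : 1 < (1 - 1 / ((k : ℝ) * (k + 1))) * (k + 1) := by
    have : (1 - 1 / ((k : ℝ) * (k + 1))) * (k + 1) = k + 1 - 1 / k := by field_simp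
    rw [this]
    have : 1 / (k : ℝ) ≤ 1 := by rw [div_le_one (by linarith)]; linarith
    linarith
  rw [← II_eq, DD_val' m k (by omega) (by linarith), DD_val' m k (by omega) hB] at h
  have e : (1 * ((k : ℝ) + 1) - 1) / k = 1 := by field_simp; ring
  have e' : ((1 - 1 / ((k : ℝ) * (k + 1))) * (k + 1) - 1) / k = 1 - 1 / (k : ℝ) ^ 2 := by
    field_simp; ring
  have e6 : ((m + k : ℕ) : ℝ) - k / 2 = m + k / 2 := by push_cast; ring
  have hp : (0 : ℝ) ≤ 1 - 1 / (k : ℝ) ^ 2 := by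
    rw [sub_nonneg, div_le_one (by positivity)]; nlinarith
  rw [e, e', Real.one_rpow, one_mul] at h
  rw [e6]
  set P := (1 - 1 / (k : ℝ) ^ 2) ^ ((m : ℝ) + k / 2) with hP
  have hP0 : 0 ≤ P := Real.rpow_nonneg hp _
  have e7 : ((k : ENNReal) + 1) = ENNReal.ofReal ((k : ℝ) + 1) := by
    rw [ENNReal.ofReal_add (by positivity) zero_le_one]; simp
  have e8 : ((R (m + k) k * (m.factorial * 2 ^ m) : ℕ) : ENNReal) =
    ENNReal.ofReal (((R (m + k) k * (m.factorial * 2 ^ m) : ℕ) : ℝ)) := by simp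
  rw [e7, e8, ← ENNReal.ofReal_mul (by positivity), ← ENNReal.ofReal_add (by positivity)
    (by positivity), ENNReal.ofReal_le_ofReal_iff (by positivity)] at h
  push_cast at h
  have hpos : (0 : ℝ) < m.factorial * 2 ^ m := by
    have := Nat.factorial_pos m
    positivity
  refine le_of_mul_le_mul_right ?_ hpos
  linarith

end ChordBubbles
end

section
namespace ChordBubbles

lemma log_FF {n k : ℕ} (hk : 1 ≤ k) (hkn : k ≤ n) : Real.log (FF n k) =
    n * Real.log 2 + (k / 2) * Real.log Real.pi - Real.log (Real.sqrt Real.pi) +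
      Real.log (Real.Gamma ((n : ℝ) - k / 2 + 1 / 2)) + ((n : ℝ) - k / 2) * Real.log k -
      ((n : ℝ) - k / 2 + 1 / 2) * Real.log ((k : ℝ) + 1) := by
  have h1 : (0 : ℝ) < k := by exact_mod_cast hk
  have h2 : (k : ℝ) ≤ n := by exact_mod_cast hkn
  have hG : 0 < Real.Gamma ((n : ℝ) - k / 2 + 1 / 2) := Real.Gamma_pos_of_pos (by linarith)
  have hpi := Real.pi_pos
  have h3 : (0 : ℝ) < (k : ℝ) ^ ((n : ℝ) - k / 2) := by positivity
  have h4 : (0 : ℝ) < ((k : ℝ) + 1) ^ ((n : ℝ) - k / 2 + 1 / 2) := by positivity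
  have h5 : (0 : ℝ) < Real.pi ^ ((k : ℝ) / 2) := by positivity
  have h6 : (0 : ℝ) < Real.sqrt Real.pi := by positivity
  unfold FF
  rw [Real.log_div (by positivity) h4.ne', Real.log_mul (by positivity) h3.ne',
    Real.log_mul (by positivity) hG.ne', Real.log_div (by positivity) h6.ne',
    Real.log_mul (by positivity) h5.ne', Real.log_rpow h1, Real.log_rpow hpi,
    Real.log_rpow (by positivity), Real.log_pow]

lemma gamma_lower {x : ℝ} (hx : 0 < x) :
    -(1 / 2) * Real.log x ≤ Real.log (Real.Gamma x) - Real.log (Real.Gamma (x + 1 / 2)) := by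
  have hx1 : x + 1 ∈ Set.Ioi (0 : ℝ) := by simp only [Set.mem_Ioi]; linarith
  have hx0 : x ∈ Set.Ioi (0 : ℝ) := hx
  have h := Real.convexOn_log_Gamma.2 hx0 hx1
    (show (0 : ℝ) ≤ 1 / 2 by norm_num) (show (0 : ℝ) ≤ 1 / 2 by norm_num) (by norm_num)
  simp only [smul_eq_mul, Function.comp] at h
  have e : 1 / 2 * x + 1 / 2 * (x + 1) = x + 1 / 2 := by ring
  rw [e, Real.Gamma_add_one hx.ne', Real.log_mul hx.ne' (Real.Gamma_pos_of_pos hx).ne'] at h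
  linarith

lemma gamma_upper {x : ℝ} (hx : 1 / 2 < x) :
    Real.log (Real.Gamma x) - Real.log (Real.Gamma (x + 1 / 2)) ≤
      -(1 / 2) * Real.log (x - 1 / 2) := by
  have hx' : 0 < x - 1 / 2 := by linarith
  have h := gamma_lower hx'
  have e : x + 1 / 2 = (x - 1 / 2) + 1 := by ring
  rw [e, Real.Gamma_add_one hx'.ne', Real.log_mul hx'.ne' (Real.Gamma_pos_of_pos hx').ne']
  rw [sub_add_cancel] at h
  linarith

lemma rho_eq {n k : ℕ} (hk : 1 ≤ k) (hkn : k + 1 ≤ n) :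
    Real.log (FF n (k + 1)) - Real.log (FF n k) = 1 / 2 * Real.log Real.pi +
      (Real.log (Real.Gamma ((n : ℝ) - k / 2)) - Real.log (Real.Gamma ((n : ℝ) - k / 2 + 1 / 2))) +
      ((n : ℝ) - k / 2) * (2 * Real.log ((k : ℝ) + 1) - Real.log k - Real.log ((k : ℝ) + 2)) := by
  rw [log_FF hk (by omega), log_FF (by omega) hkn]
  have e1 : (n : ℝ) - ((k + 1 : ℕ) : ℝ) / 2 + 1 / 2 = n - k / 2 := by push_cast; ring
  have e2 : (n : ℝ) - ((k + 1 : ℕ) : ℝ) / 2 = n - k / 2 - 1 / 2 := by push_cast; ring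
  have e3 : ((k + 1 : ℕ) : ℝ) + 1 = k + 2 := by push_cast; ring
  rw [e1, e2, e3]
  push_cast
  ring

lemma rho_lower {n k : ℕ} (hk : 1 ≤ k) (hkn : k + 1 ≤ n) :
    -(1 / 2 * Real.log (n / Real.pi)) + n / ((k : ℝ) + 1) ^ 2 - 1 / (2 * ((k : ℝ) + 1)) ≤
    Real.log (FF n (k + 1)) - Real.log (FF n k) := by
  have h1 : (1 : ℝ) ≤ k := by exact_mod_cast hk
  have h2 : (k : ℝ) + 1 ≤ n := by exact_mod_cast hkn
  rw [rho_eq hk hkn, Real.log_div (by linarith) Real.pi_pos.ne']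
  have h3 := gamma_lower (x := (n : ℝ) - k / 2) (by linarith)
  have h4 : Real.log ((n : ℝ) - k / 2) ≤ Real.log n := Real.log_le_log (by linarith) (by linarith)
  have h5 : 1 / ((k : ℝ) + 1) ^ 2 ≤ 2 * Real.log ((k : ℝ) + 1) - Real.log k - Real.log ((k : ℝ) + 2) := by
    have h := Real.one_sub_inv_le_log_of_pos (x := ((k : ℝ) + 1) ^ 2 / (k * (k + 2))) (by positivity)
    rw [Real.log_div (by positivity) (by positivity), Real.log_pow, Real.log_mul (by positivity)
      (by positivity)] at h
    have e : 1 - (((k : ℝ) + 1) ^ 2 / (k * (k + 2)))⁻¹ = 1 / ((k : ℝ) + 1) ^ 2 := by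
      field_simp; ring
    rw [e] at h
    push_cast at h
    linarith
  have h6 : n / ((k : ℝ) + 1) ^ 2 - 1 / (2 * ((k : ℝ) + 1)) ≤
      ((n : ℝ) - k / 2) * (1 / ((k : ℝ) + 1) ^ 2) := by
    have : ((n : ℝ) - k / 2) * (1 / ((k : ℝ) + 1) ^ 2) -
      (n / ((k : ℝ) + 1) ^ 2 - 1 / (2 * ((k : ℝ) + 1))) = 1 / (2 * ((k : ℝ) + 1) ^ 2) := by
      field_simp; ring
    have : 0 ≤ 1 / (2 * ((k : ℝ) + 1) ^ 2) := by positivity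
    linarith
  have h7 := mul_le_mul_of_nonneg_left h5 (a := (n : ℝ) - k / 2) (by linarith)
  linarith

lemma rho_upper {n k : ℕ} (hk : 1 ≤ k) (hkn : k + 1 ≤ n) :
    Real.log (FF n (k + 1)) - Real.log (FF n k) ≤
    -(1 / 2 * Real.log (n / Real.pi)) + n / (((k : ℝ) + 1) ^ 2 - 1) + ((k : ℝ) + 1) / (2 * n) := by
  have h1 : (1 : ℝ) ≤ k := by exact_mod_cast hk
  have h2 : (k : ℝ) + 1 ≤ n := by exact_mod_cast hkn
  rw [rho_eq hk hkn, Real.log_div (by linarith) Real.pi_pos.ne']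
  have h3 := gamma_upper (x := (n : ℝ) - k / 2) (by linarith)
  have h4 : Real.log n - ((k : ℝ) + 1) / n ≤ Real.log ((n : ℝ) - k / 2 - 1 / 2) := by
    have hn : (0 : ℝ) < n := by linarith
    have hy : (0 : ℝ) < n - k / 2 - 1 / 2 := by linarith
    have h := Real.one_sub_inv_le_log_of_pos (x := ((n : ℝ) - k / 2 - 1 / 2) / n) (by positivity)
    rw [Real.log_div hy.ne' hn.ne', inv_div] at h
    have : (n : ℝ) / (n - k / 2 - 1 / 2) ≤ 1 + ((k : ℝ) + 1) / n := by
      rw [div_le_iff₀ hy]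
      have : (1 + ((k : ℝ) + 1) / n) * (n - k / 2 - 1 / 2) - n =
        ((k : ℝ) + 1) * (n - (k + 1)) / (2 * n) := by field_simp; ring
      have : 0 ≤ ((k : ℝ) + 1) * (n - (k + 1)) / (2 * n) := by
        apply div_nonneg (mul_nonneg _ _) <;> linarith
      linarith
    linarith
  have h5 : 2 * Real.log ((k : ℝ) + 1) - Real.log k - Real.log ((k : ℝ) + 2) ≤
      1 / (((k : ℝ) + 1) ^ 2 - 1) := by
    have h := Real.log_le_sub_one_of_pos (x := ((k : ℝ) + 1) ^ 2 / (k * (k + 2))) (by positivity)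
    rw [Real.log_div (by positivity) (by positivity), Real.log_pow, Real.log_mul (by positivity)
      (by positivity)] at h
    have e0 : ((k : ℝ) + 1) ^ 2 - 1 = k * (k + 2) := by ring
    have e : ((k : ℝ) + 1) ^ 2 / (k * (k + 2)) - 1 = 1 / (((k : ℝ) + 1) ^ 2 - 1) := by
      rw [e0]; field_simp; ring
    rw [e] at h
    push_cast at h
    linarith
  have h8 : (0 : ℝ) < ((k : ℝ) + 1) ^ 2 - 1 := by nlinarith
  have h6 : ((n : ℝ) - k / 2) * (1 / (((k : ℝ) + 1) ^ 2 - 1)) ≤ n / (((k : ℝ) + 1) ^ 2 - 1) := by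
    rw [mul_one_div]
    gcongr
    linarith
  have h7 := mul_le_mul_of_nonneg_left h5 (a := (n : ℝ) - k / 2) (by linarith)
  have e9 : ((k : ℝ) + 1) / (2 * n) = 1 / 2 * (((k : ℝ) + 1) / n) := by
    have : (n : ℝ) ≠ 0 := by linarith
    field_simp
  rw [e9]
  linarith

end ChordBubbles
end

section
namespace ChordBubbles

lemma near_real {l s Y q n K : ℝ} (hl : 1 ≤ l) (hs : 1 ≤ s) (hY : Y ≤ l * s)
    (hq : q = 2 * l * s ^ 2) (hn : n = l * q ^ 2) (hK : |K - q| ≤ Y * s) (hK2 : 2 ≤ K) :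
    -(K - q) / s ^ 2 - (4 * Y ^ 2 + 10) / s ^ 2 ≤ -l + n / K ^ 2 - 1 / (2 * K) ∧
    -l + n / (K ^ 2 - 1) + K / (2 * n) ≤ -(K - q) / s ^ 2 + (4 * Y ^ 2 + 10) / s ^ 2 := by
  have hs2 : 1 ≤ s ^ 2 := by nlinarith
  have hqpos : 2 ≤ q := by rw [hq]; nlinarith
  have hqs : 2 * s ^ 2 ≤ q := by rw [hq]; nlinarith
  have hYs : Y * s ≤ q / 2 := by
    rw [hq]; nlinarith
  have hd := abs_le.1 hK
  have hd2 : (K - q) ^ 2 ≤ Y ^ 2 * s ^ 2 := by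
    rw [← mul_pow, ← sq_abs (K - q)]
    exact pow_le_pow_left₀ (abs_nonneg _) hK 2
  have hKl : q / 2 ≤ K := by linarith
  have hKu : K ≤ 3 * q / 2 := by linarith
  have hl0 : 0 < l := by linarith
  have hs0 : 0 < s := by linarith
  have hq0 : 0 < q := by linarith
  have hK0 : 0 < K := by linarith
  have hKsq : q ^ 2 / 4 ≤ K ^ 2 := by nlinarith
  have main_eq : n / K ^ 2 - l + (K - q) / s ^ 2 = l * (K - q) ^ 2 * (q + 2 * K) / (q * K ^ 2) := by
    have e : (K - q) / s ^ 2 = 2 * l * (K - q) / q := by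
      rw [hq]; field_simp
    rw [e, hn]
    field_simp
    ring
  have main_nonneg : 0 ≤ n / K ^ 2 - l + (K - q) / s ^ 2 := by
    rw [main_eq]; positivity
  have main_le : n / K ^ 2 - l + (K - q) / s ^ 2 ≤ 4 * Y ^ 2 / s ^ 2 := by
    rw [main_eq]
    calc l * (K - q) ^ 2 * (q + 2 * K) / (q * K ^ 2)
        ≤ l * (Y ^ 2 * s ^ 2) * (4 * q) / (q * (q ^ 2 / 4)) := by
          gcongr
          linarith
      _ = 4 * Y ^ 2 / (l * s ^ 2) := by
          rw [hq]; field_simp; ring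
      _ ≤ 4 * Y ^ 2 / s ^ 2 := by
          gcongr
          nlinarith
  have e1 : 1 / (2 * K) ≤ 1 / s ^ 2 := by
    apply one_div_le_one_div_of_le (by positivity)
    linarith
  have e2 : n / (K ^ 2 - 1) ≤ n / K ^ 2 + 8 / s ^ 2 := by
    have hK1 : K ^ 2 / 2 ≤ K ^ 2 - 1 := by nlinarith
    have hn0 : 0 < n := by rw [hn]; positivity
    have hK1' : 0 < K ^ 2 - 1 := by nlinarith
    have : n / (K ^ 2 - 1) - n / K ^ 2 = n / (K ^ 2 * (K ^ 2 - 1)) := by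
      field_simp; ring
    have h2 : n / (K ^ 2 * (K ^ 2 - 1)) ≤ n / (q ^ 2 / 4 * (q ^ 2 / 4 / 2)) := by
      gcongr
      linarith
    have h3 : n / (q ^ 2 / 4 * (q ^ 2 / 4 / 2)) = 8 / (l * s ^ 4) := by
      rw [hn, hq]; field_simp; ring
    have h4 : 8 / (l * s ^ 4) ≤ 8 / s ^ 2 := by
      gcongr
      nlinarith
    linarith
  have e3 : K / (2 * n) ≤ 1 / s ^ 2 := by
    calc K / (2 * n) ≤ (3 * q / 2) / (2 * n) := by
          have hn0 : 0 < n := by rw [hn]; positivity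
          gcongr
      _ = 3 / (4 * l * q) := by rw [hn]; field_simp; ring
      _ ≤ 1 / s ^ 2 := by
        rw [div_le_div_iff₀ (by positivity) (by positivity)]
        nlinarith
  have e4 : (4 * Y ^ 2 + 10) / s ^ 2 = 4 * Y ^ 2 / s ^ 2 + 8 / s ^ 2 + 1 / s ^ 2 + 1 / s ^ 2 := by
    field_simp; ring
  have e5 : -(K - q) / s ^ 2 = -((K - q) / s ^ 2) := by ring
  have e6 : 0 ≤ 1 / s ^ 2 := by positivity
  have e7 : 0 ≤ 8 / s ^ 2 := by positivity
  have e8 : 0 ≤ 4 * Y ^ 2 / s ^ 2 := by positivity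
  rw [e4, e5]
  constructor <;> linarith

lemma far_right {l s q n K : ℝ} (hl : 2 ≤ l) (hs : 8 ≤ s)
    (hq : q = 2 * l * s ^ 2) (hn : n = l * q ^ 2) (hK : q + s ≤ K) (hKn : K ≤ n) :
    -l + n / (K ^ 2 - 1) + K / (2 * n) ≤ -1 / (4 * s) := by
  have hl0 : 0 < l := by linarith
  have hs0 : 0 < s := by linarith
  have hs2 : 8 * s ≤ s ^ 2 := by nlinarith
  have hqs : 4 * s ^ 2 ≤ q := by rw [hq]; nlinarith
  have hq0 : 0 < q := by nlinarith
  have hK0 : 0 < K := by linarith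
  have hn0 : 0 < n := by rw [hn]; positivity
  have h14 : 1 / (4 * s) ≤ 1 / 32 := by
    apply one_div_le_one_div_of_le (by norm_num); linarith
  have eneg : -1 / (4 * s) = -(1 / (4 * s)) := by ring
  rw [eneg]
  have hq1 : 32 ≤ q := by nlinarith
  by_cases hK2 : K ≤ 2 * q
  · have hK1' : 0 < K ^ 2 - 1 := by nlinarith
    have hK1 : K ^ 2 / 2 ≤ K ^ 2 - 1 := by nlinarith
    have h1 : n / (K ^ 2 - 1) = n / K ^ 2 + n / (K ^ 2 * (K ^ 2 - 1)) := by
      field_simp; ring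
    have h2 : n / (K ^ 2 * (K ^ 2 - 1)) ≤ n / (q ^ 2 * (q ^ 2 / 2)) := by
      have : q ^ 2 ≤ K ^ 2 := by nlinarith
      gcongr
      linarith
    have h3 : n / (q ^ 2 * (q ^ 2 / 2)) = 1 / (2 * l * s ^ 4) := by
      rw [hn, hq]; field_simp
    have h4 : 1 / (2 * l * s ^ 4) ≤ 1 / (32 * s) := by
      apply one_div_le_one_div_of_le (by positivity)
      have : 512 * s ≤ s ^ 4 := by
        have : (8 : ℝ) ^ 3 ≤ s ^ 3 := pow_le_pow_left₀ (by norm_num) hs 3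
        nlinarith
      nlinarith
    have h5 : K / (2 * n) ≤ 1 / (32 * s) := by
      calc K / (2 * n) ≤ (2 * q) / (2 * n) := by gcongr
        _ = 1 / (l * q) := by rw [hn]; field_simp
        _ ≤ 1 / (32 * s) := by
          apply one_div_le_one_div_of_le (by positivity)
          nlinarith
    have h6 : n / K ^ 2 - l ≤ -(3 / (8 * s)) := by
      have e1 : n / K ^ 2 - l = -(l * (K - q) * (K + q) / K ^ 2) := by
        rw [hn]; field_simp; ring
      rw [e1]
      apply neg_le_neg
      have e2 : 3 / (8 * s) = l * s * (3 / 4) / q := by rw [hq]; field_simp; ring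
      rw [e2, div_le_div_iff₀ hq0 (by positivity)]
      have : (3 / 4) * K ^ 2 ≤ (K + q) * q := by nlinarith
      calc l * s * (3 / 4) * K ^ 2 = l * s * ((3 / 4) * K ^ 2) := by ring
        _ ≤ l * s * ((K + q) * q) := by gcongr
        _ ≤ l * (K - q) * ((K + q) * q) := by gcongr; linarith
        _ = _ := by ring
    have h7 : 3 / (8 * s) - 1 / (32 * s) - 1 / (32 * s) = 1 / (4 * s) + 1 / (16 * s) := by
      field_simp; norm_num
    have h8 : 0 ≤ 1 / (16 * s) := by positivity
    rw [h1]
    linarith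
  · push Not at hK2
    have h1 : n / (K ^ 2 - 1) ≤ l / 3 := by
      rw [div_le_div_iff₀ (by nlinarith) (by norm_num), hn]
      have : 3 * q ^ 2 ≤ K ^ 2 - 1 := by nlinarith
      nlinarith
    have h2 : K / (2 * n) ≤ 1 / 2 := by
      rw [div_le_div_iff₀ (by positivity) (by norm_num)]
      linarith
    linarith

lemma far_left {l s q n K : ℝ} (hl : 1 ≤ l) (hs : 1 ≤ s)
    (hq : q = 2 * l * s ^ 2) (hn : n = l * q ^ 2) (hK : K ≤ q - s) (hK0 : 0 < K) :
    1 / (4 * s) ≤ -l + n / K ^ 2 - 1 / (2 * K) := by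
  have hl0 : 0 < l := by linarith
  have hs0 : 0 < s := by linarith
  have hq0 : 0 < q := by rw [hq]; positivity
  have hls : 1 ≤ l * s := by nlinarith
  have h1 : (2 * l * s - 1 / 2) / K ≤ -l + n / K ^ 2 - 1 / (2 * K) := by
    have e1 : -l + n / K ^ 2 - 1 / (2 * K) - (2 * l * s - 1 / 2) / K =
      l * ((q - K) * (q + K) - 2 * s * K) / K ^ 2 := by
      rw [hn]; field_simp; ring
    have : 0 ≤ l * ((q - K) * (q + K) - 2 * s * K) / K ^ 2 := by
      have : 2 * s * K ≤ (q - K) * (q + K) := by nlinarith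
      have : 0 ≤ (q - K) * (q + K) - 2 * s * K := by linarith
      positivity
    linarith
  refine le_trans ?_ h1
  rw [div_le_div_iff₀ (by positivity) hK0]
  have : K ≤ 2 * l * s ^ 2 := by linarith
  nlinarith

end ChordBubbles
end

section
namespace ChordBubbles

noncomputable def Lg (n k : ℕ) : ℝ := Real.log (FF n k)

/-- the parameters are related as they should be -/
def Par (n : ℕ) (l s q : ℝ) : Prop :=
  2 ≤ l ∧ 100 ≤ s ∧ q = 2 * l * s ^ 2 ∧ (n : ℝ) = l * q ^ 2 ∧ l = 1 / 2 * Real.log (n / Real.pi)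

lemma Par.q_ge {n : ℕ} {l s q : ℝ} (h : Par n l s q) : 4 * s ^ 2 ≤ q ∧ 400 * s ≤ q ∧ 40000 ≤ q ∧ 2 * q ≤ n := by
  obtain ⟨hl, hs, hq, hn, -⟩ := h
  have h1 : 4 * s ^ 2 ≤ q := by rw [hq]; nlinarith
  have h2 : 400 * s ≤ q := by nlinarith
  have h3 : 40000 ≤ q := by linarith
  refine ⟨h1, h2, h3, ?_⟩
  rw [hn]
  have : q ≤ q ^ 2 := by nlinarith
  nlinarith

lemma step_near {n : ℕ} {l s q Y : ℝ} (h : Par n l s q) {k : ℕ} (hk : 1 ≤ k) (hkn : k + 1 ≤ n)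
    (hY : Y ≤ l * s) (hK : |(k : ℝ) + 1 - q| ≤ Y * s) :
    |Lg n (k + 1) - Lg n k + ((k : ℝ) + 1 - q) / s ^ 2| ≤ (4 * Y ^ 2 + 10) / s ^ 2 := by
  obtain ⟨hl, hs, hq, hn, hll⟩ := h
  have h1 : (1 : ℝ) ≤ k := by exact_mod_cast hk
  have hlo := rho_lower hk hkn
  have hup := rho_upper hk hkn
  rw [← hll] at hlo hup
  obtain ⟨a, b⟩ := near_real (by linarith) (by linarith) hY hq hn hK (by linarith)
  unfold Lg
  have e5 : -((k : ℝ) + 1 - q) / s ^ 2 = -(((k : ℝ) + 1 - q) / s ^ 2) := by ring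
  rw [e5] at a b
  rw [abs_le]
  constructor <;> linarith

lemma step_right {n : ℕ} {l s q : ℝ} (h : Par n l s q) {k : ℕ} (hk : 1 ≤ k) (hkn : k + 1 ≤ n)
    (hK : q + s ≤ (k : ℝ) + 1) : Lg n (k + 1) - Lg n k ≤ -(1 / (4 * s)) := by
  obtain ⟨hl, hs, hq, hn, hll⟩ := h
  have hup := rho_upper hk hkn
  rw [← hll] at hup
  have := far_right hl (by linarith) hq hn hK (by exact_mod_cast hkn)
  have eneg : -1 / (4 * s) = -(1 / (4 * s)) := by ring
  unfold Lg
  linarith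

lemma step_left {n : ℕ} {l s q : ℝ} (h : Par n l s q) {k : ℕ} (hk : 1 ≤ k) (hkn : k + 1 ≤ n)
    (hK : (k : ℝ) + 1 ≤ q - s) : 1 / (4 * s) ≤ Lg n (k + 1) - Lg n k := by
  obtain ⟨hl, hs, hq, hn, hll⟩ := h
  have hlo := rho_lower hk hkn
  rw [← hll] at hlo
  have := far_left (by linarith) (by linarith) hq hn hK (by positivity)
  unfold Lg
  linarith

lemma Par.k0 {n : ℕ} {l s q : ℝ} (h : Par n l s q) : 1 ≤ ⌊q⌋₊ ∧ ⌊q⌋₊ ≤ n ∧ (⌊q⌋₊ : ℝ) ≤ q ∧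
    q < ⌊q⌋₊ + 1 := by
  obtain ⟨h1, h2, h3, h4⟩ := h.q_ge
  refine ⟨?_, ?_, Nat.floor_le (by linarith), Nat.lt_floor_add_one q⟩
  · rw [Nat.one_le_floor_iff]; linarith
  · have : (⌊q⌋₊ : ℝ) ≤ n := (Nat.floor_le (by linarith)).trans (by linarith)
    exact_mod_cast this

lemma near46 {s : ℝ} (hs : 100 ≤ s) : (4 * (3 : ℝ) ^ 2 + 10) / s ^ 2 ≤ 1 / s := by
  rw [div_le_div_iff₀ (by positivity) (by positivity)]
  nlinarith

lemma dom_up {n : ℕ} {l s q : ℝ} (h : Par n l s q) {k : ℕ} (hk : ⌊q⌋₊ ≤ k) (hkn : k ≤ n) :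
    Lg n k + (k - q) / (4 * s) ≤ Lg n ⌊q⌋₊ + (⌊q⌋₊ - q) / (4 * s) +
      min ((k : ℝ) - ⌊q⌋₊) (s + 1) * (2 / s) := by
  obtain ⟨h1, h2, h3, h4⟩ := h.k0
  have hs : 100 ≤ s := h.2.1
  have hs0 : 0 < s := by linarith
  induction k, hk using Nat.le_induction with
  | base => simp; rw [min_eq_left (by linarith)]; simp
  | succ k hk ih =>
    have ih := ih (by omega)
    have hk' : (⌊q⌋₊ : ℝ) ≤ k := by exact_mod_cast hk
    push_cast
    have e : ((k : ℝ) + 1 - q) / (4 * s) = (k - q) / (4 * s) + 1 / (4 * s) := by ring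
    rw [e]
    by_cases hc : q + s ≤ (k : ℝ) + 1
    · have := step_right h (h1.trans hk) hkn hc
      have hm : min ((k : ℝ) - ⌊q⌋₊) (s + 1) * (2 / s) ≤ min ((k : ℝ) + 1 - ⌊q⌋₊) (s + 1) * (2 / s) := by
        gcongr
        linarith
      linarith
    · push Not at hc
      have hls : 3 ≤ l * s := by nlinarith [h.1]
      have hn := step_near (Y := 3) h (h1.trans hk) hkn hls (by rw [abs_le]; constructor <;> linarith)
      have hn2 := (abs_le.1 hn).2
      have h46 := near46 hs
      have hp : 0 ≤ ((k : ℝ) + 1 - q) / s ^ 2 := by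
        apply div_nonneg <;> nlinarith
      rw [min_eq_left (by linarith)] at ih ⊢
      have e2 : ((k : ℝ) + 1 - ⌊q⌋₊) * (2 / s) = (k - ⌊q⌋₊) * (2 / s) + 1 / s + 1 / s := by ring
      have e3 : 1 / (4 * s) ≤ 1 / s := by
        apply one_div_le_one_div_of_le <;> linarith
      linarith

lemma dom_down {n : ℕ} {l s q : ℝ} (h : Par n l s q) (j : ℕ) (hj : j + 1 ≤ ⌊q⌋₊) :
    Lg n (⌊q⌋₊ - j) + (q - (⌊q⌋₊ - j)) / (4 * s) ≤ Lg n ⌊q⌋₊ + (q - ⌊q⌋₊) / (4 * s) +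
      min (j : ℝ) (s + 1) * (2 / s) := by
  obtain ⟨h1, h2, h3, h4⟩ := h.k0
  have hs : 100 ≤ s := h.2.1
  have hs0 : 0 < s := by linarith
  induction j with
  | zero => simp; rw [min_eq_left (by linarith)]; simp
  | succ j ih =>
    have ih := ih (by omega)
    obtain ⟨k, hk⟩ : ∃ k, ⌊q⌋₊ - (j + 1) = k := ⟨_, rfl⟩
    have hk2 : ⌊q⌋₊ - j = k + 1 := by omega
    have hk1 : 1 ≤ k := by omega
    have hkn : k + 1 ≤ n := by omega
    have hkr : (⌊q⌋₊ : ℝ) - j = k + 1 := by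
      have : ⌊q⌋₊ = k + 1 + j := by omega
      rw [this]; push_cast; ring
    have hkr2 : (⌊q⌋₊ : ℝ) - (j + 1) = k := by linarith
    rw [hk2, hkr] at ih
    rw [hk]
    push_cast
    rw [hkr2]
    have e : (q - (k : ℝ)) / (4 * s) = (q - (k + 1)) / (4 * s) + 1 / (4 * s) := by ring
    rw [e]
    by_cases hc : (k : ℝ) + 1 ≤ q - s
    · have := step_left h hk1 hkn hc
      have hm : min (j : ℝ) (s + 1) * (2 / s) ≤ min ((j : ℝ) + 1) (s + 1) * (2 / s) := by
        gcongr
        linarith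
      linarith
    · push Not at hc
      have hls : 3 ≤ l * s := by nlinarith [h.1]
      have hj0 : (0 : ℝ) ≤ j := by positivity
      have hn := step_near (Y := 3) h hk1 hkn hls (by rw [abs_le]; constructor <;> linarith)
      have hn2 := (abs_le.1 hn).1
      have h46 := near46 hs
      have hp : ((k : ℝ) + 1 - q) / s ^ 2 ≤ 0 := by
        apply div_nonpos_of_nonpos_of_nonneg
        · linarith
        · positivity
      rw [min_eq_left (by linarith)] at ih ⊢
      have e2 : ((j : ℝ) + 1) * (2 / s) = j * (2 / s) + 1 / s + 1 / s := by ring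
      have e3 : 1 / (4 * s) ≤ 1 / s := by
        apply one_div_le_one_div_of_le <;> linarith
      linarith

lemma dom {n : ℕ} {l s q : ℝ} (h : Par n l s q) {k : ℕ} (hk : 1 ≤ k) (hkn : k ≤ n) :
    Lg n k - Lg n ⌊q⌋₊ ≤ 3 - |(k : ℝ) - q| / (4 * s) := by
  obtain ⟨h1, h2, h3, h4⟩ := h.k0
  have hs : 100 ≤ s := h.2.1
  have hs0 : 0 < s := by linarith
  have b1 : (s + 1) * (2 / s) ≤ 5 / 2 := by
    rw [mul_div_assoc', div_le_div_iff₀ hs0 (by norm_num)]; linarith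
  have b2 : 1 / (4 * s) ≤ 1 / 400 := by
    apply one_div_le_one_div_of_le <;> linarith
  have b3 : (q - ⌊q⌋₊) / (4 * s) ≤ 1 / (4 * s) := by gcongr; linarith
  have b4 : 0 ≤ (q - ⌊q⌋₊) / (4 * s) := by apply div_nonneg <;> linarith
  have b5 : ((⌊q⌋₊ : ℝ) - q) / (4 * s) = -((q - ⌊q⌋₊) / (4 * s)) := by ring
  rcases le_total ⌊q⌋₊ k with hc | hc
  · have hu := dom_up h hc hkn
    have hm : min ((k : ℝ) - ⌊q⌋₊) (s + 1) * (2 / s) ≤ (s + 1) * (2 / s) := by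
      gcongr; exact min_le_right _ _
    have hk' : (⌊q⌋₊ : ℝ) ≤ k := by exact_mod_cast hc
    have ha : |(k : ℝ) - q| / (4 * s) ≤ (k - q) / (4 * s) + 2 * (1 / (4 * s)) := by
      have : (k - q) / (4 * s) + 2 * (1 / (4 * s)) = (k - q + 2) / (4 * s) := by ring
      rw [this]
      gcongr
      rw [abs_le]; constructor <;> linarith
    linarith
  · have hd := dom_down h (⌊q⌋₊ - k) (by omega)
    have e : ⌊q⌋₊ - (⌊q⌋₊ - k) = k := by omega
    have hk' : (k : ℝ) ≤ ⌊q⌋₊ := by exact_mod_cast hc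
    rw [e, Nat.cast_sub hc, sub_sub_cancel] at hd
    have hm : min ((⌊q⌋₊ : ℝ) - k) (s + 1) * (2 / s) ≤ (s + 1) * (2 / s) := by
      gcongr; exact min_le_right _ _
    rw [abs_of_nonpos (by linarith), neg_sub]
    linarith

lemma ptw {n : ℕ} {l s q X : ℝ} (h : Par n l s q) (hX : 0 ≤ X) (hXl : X + 1 ≤ s) {k : ℕ}
    (hk : |(k : ℝ) - q| ≤ X * s) :
    |(Lg n k + ((k : ℝ) - q) ^ 2 / (2 * s ^ 2)) - (Lg n ⌊q⌋₊ + ((⌊q⌋₊ : ℝ) - q) ^ 2 / (2 * s ^ 2))| ≤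
      (X + 1) * (4 * (X + 1) ^ 2 + 11) / s := by
  obtain ⟨h1, h2, h3, h4⟩ := h.k0
  obtain ⟨g1, g2, g3, g4⟩ := h.q_ge
  have hs : 100 ≤ s := h.2.1
  have hs0 : 0 < s := by linarith
  have hab := abs_le.1 hk
  have hXs : X * s ≤ q / 4 := by nlinarith
  have hk1 : 1 ≤ k := by
    have : (1 : ℝ) ≤ k := by linarith
    exact_mod_cast this
  have hkn : k ≤ n := by
    have : (k : ℝ) ≤ n := by linarith
    exact_mod_cast this
  set D : ℕ → ℝ := fun k => Lg n k + ((k : ℝ) - q) ^ 2 / (2 * s ^ 2) with hD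
  set c := (4 * (X + 1) ^ 2 + 11) / s ^ 2 with hc
  have step : ∀ j : ℕ, 1 ≤ j → j + 1 ≤ n → |(j : ℝ) + 1 - q| ≤ (X + 1) * s →
      dist (D j) (D (j + 1)) ≤ c := by
    intro j hj hjn hjq
    have hn := step_near h hj hjn (by nlinarith [h.1]) hjq
    rw [dist_comm, Real.dist_eq]
    have e : D (j + 1) - D j = (Lg n (j + 1) - Lg n j + ((j : ℝ) + 1 - q) / s ^ 2) - 1 / (2 * s ^ 2) := by
      simp only [hD]
      push_cast
      field_simp
      ring
    rw [e]
    refine (abs_sub _ _).trans ?_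
    rw [abs_of_nonneg (show 0 ≤ 1 / (2 * s ^ 2) by positivity)]
    have : 1 / (2 * s ^ 2) ≤ 1 / s ^ 2 := by
      apply one_div_le_one_div_of_le <;> nlinarith
    have e2 : c = (4 * (X + 1) ^ 2 + 10) / s ^ 2 + 1 / s ^ 2 := by rw [hc]; ring
    linarith
  have hc0 : 0 ≤ c := by positivity
  have efin : (X + 1) * s * c = (X + 1) * (4 * (X + 1) ^ 2 + 11) / s := by
    rw [hc]; field_simp
  rw [← efin]
  show |D k - D ⌊q⌋₊| ≤ _
  have hXs0 : 0 ≤ X * s := by positivity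
  rcases le_total ⌊q⌋₊ k with hle | hle
  · have hd := dist_le_Ico_sum_of_dist_le (f := D) hle (d := fun _ => c) (by
      intro j hj1 hj2
      apply step j (by omega) (by omega)
      have e1 : (⌊q⌋₊ : ℝ) ≤ j := by exact_mod_cast hj1
      have e2 : (j : ℝ) + 1 ≤ k := by exact_mod_cast hj2
      rw [abs_le]; constructor <;> nlinarith)
    rw [← Real.dist_eq, dist_comm]
    refine hd.trans ?_
    simp only [Finset.sum_const, Nat.card_Ico, nsmul_eq_mul]
    gcongr
    rw [Nat.cast_sub hle]
    nlinarith
  · have hd := dist_le_Ico_sum_of_dist_le (f := D) hle (d := fun _ => c) (by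
      intro j hj1 hj2
      apply step j (by omega) (by omega)
      have e1 : (k : ℝ) ≤ j := by exact_mod_cast hj1
      have e2 : (j : ℝ) + 1 ≤ ⌊q⌋₊ := by exact_mod_cast hj2
      rw [abs_le]; constructor <;> nlinarith)
    rw [← Real.dist_eq]
    refine hd.trans ?_
    simp only [Finset.sum_const, Nat.card_Ico, nsmul_eq_mul]
    gcongr
    rw [Nat.cast_sub hle]
    nlinarith

end ChordBubbles
end

section
namespace ChordBubbles
open MeasureTheory Set Filter Topology

lemma integrable_exp_abs8 : Integrable (fun x : ℝ => Real.exp (-|x| / 8)) := by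
  have h : IntegrableOn (fun x : ℝ => Real.exp (-|x| / 8)) (Ioi 0) := by
    have := exp_neg_integrableOn_Ioi (0 : ℝ) (b := 1 / 8) (by norm_num)
    refine this.congr_fun (fun x hx => ?_) measurableSet_Ioi
    simp only
    rw [abs_of_pos hx]; congr 1; ring
  have h2 : IntegrableOn (fun x : ℝ => Real.exp (-|x| / 8)) (Iic 0) := by
    have := (integrableOn_Ici_iff_integrableOn_Ioi (by finiteness)).2 h
    have h3 := (Measure.measurePreserving_neg (volume : Measure ℝ)).integrableOn_comp_preimage (Homeomorph.neg ℝ).measurableEmbedding (f := fun x : ℝ => Real.exp (-|x| / 8)) (s := Ici 0)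
    have h4 := h3.2 this
    have e : ((fun x : ℝ => Real.exp (-|x| / 8)) ∘ Neg.neg) = (fun x : ℝ => Real.exp (-|x| / 8)) := by
      ext x; simp
    rw [e] at h4
    simpa using h4
  have := h2.union h
  rwa [Iic_union_Ioi, integrableOn_univ] at this

lemma pow_exp_bound (i : ℕ) {t : ℝ} (ht : 0 ≤ t) :
    t ^ i * Real.exp (-t / 4) ≤ i.factorial * 8 ^ i * Real.exp (-t / 8) := by
  have h := Real.pow_div_factorial_le_exp (t / 8) (by positivity) i
  rw [div_pow, div_div, div_le_iff₀ (by positivity)] at h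
  have e : Real.exp (-t / 8) = Real.exp (t / 8) * Real.exp (-t / 4) := by
    rw [← Real.exp_add]; congr 1; ring
  rw [e]
  have := mul_le_mul_of_nonneg_right h (Real.exp_pos (-t / 4)).le
  linarith

lemma floor_sum (n : ℕ) {q s : ℝ} (hs : 0 < s) (v : ℕ → ℝ) (x : ℝ) :
    ∑ k ∈ Finset.Icc 1 n, (Ico (((k : ℝ) - q) / s) (((k : ℝ) + 1 - q) / s)).indicator (fun _ => v k) x
      = if ⌊q + s * x⌋₊ ∈ Finset.Icc 1 n then v ⌊q + s * x⌋₊ else 0 := by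
  rw [← Finset.sum_ite_eq (Finset.Icc 1 n) ⌊q + s * x⌋₊ v]
  refine Finset.sum_congr rfl fun k hk => ?_
  rw [Finset.mem_Icc] at hk
  rw [indicator_apply]
  refine if_congr ?_ rfl rfl
  rw [Nat.floor_eq_iff' (by omega), mem_Ico, div_le_iff₀ hs, lt_div_iff₀ hs]
  constructor <;> rintro ⟨a, b⟩ <;> constructor <;> linarith

lemma floor_close {q s x : ℝ} (hs : 0 < s) (h : 0 ≤ q + s * x) :
    |((⌊q + s * x⌋₊ : ℝ) - q) / s - x| ≤ 1 / s := by
  have h1 := Nat.floor_le h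
  have h2 := Nat.lt_floor_add_one (q + s * x)
  have e : ((⌊q + s * x⌋₊ : ℝ) - q) / s - x = ((⌊q + s * x⌋₊ : ℝ) - (q + s * x)) / s := by
    field_simp; ring
  rw [e, abs_div, abs_of_pos hs]
  gcongr
  rw [abs_le]; constructor <;> linarith

lemma lemA (q s : ℕ → ℝ) (a : ℕ → ℕ → ℝ) (C : ℝ) (hC : 0 ≤ C) (hs : Tendsto s atTop atTop)
    (hqs : Tendsto (fun n => q n / s n) atTop atTop)
    (hdom : ∀ᶠ n in atTop, ∀ k ∈ Finset.Icc 1 n, 0 ≤ a n k ∧ a n k ≤ C * Real.exp (-|(k : ℝ) - q n| / (4 * s n)))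
    (hptw : ∀ x : ℝ, Tendsto (fun n => if ⌊q n + s n * x⌋₊ ∈ Finset.Icc 1 n then
      a n ⌊q n + s n * x⌋₊ else 0) atTop (𝓝 (Real.exp (-x ^ 2 / 2)))) (i : ℕ) :
    Tendsto (fun n : ℕ => ∑ k ∈ Finset.Icc 1 n, (((k : ℝ) - q n) / s n) ^ i * a n k / s n) atTop
      (𝓝 (∫ x : ℝ, x ^ i * Real.exp (-x ^ 2 / 2))) := by
  set g : ℕ → ℝ → ℝ := fun n x => ∑ k ∈ Finset.Icc 1 n,
    (Ico (((k : ℝ) - q n) / s n) (((k : ℝ) + 1 - q n) / s n)).indicator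
      (fun _ => (((k : ℝ) - q n) / s n) ^ i * a n k) x with hg
  have hs1 : ∀ᶠ n in atTop, 1 ≤ s n := hs.eventually_ge_atTop 1
  have key : Tendsto (fun n => ∫ x, g n x) atTop (𝓝 (∫ x : ℝ, x ^ i * Real.exp (-x ^ 2 / 2))) := by
    refine tendsto_integral_filter_of_dominated_convergence
      (fun x => C * (i.factorial * 8 ^ i * Real.exp (1 / 8)) * Real.exp (-|x| / 8)) ?_ ?_ ?_ ?_
    · refine Eventually.of_forall fun n => ?_
      refine Measurable.aestronglyMeasurable ?_
      refine Finset.measurable_fun_sum _ fun k _ => ?_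
      exact measurable_const.indicator measurableSet_Ico
    · filter_upwards [hs1, hdom] with n h1 hd
      refine Eventually.of_forall fun x => ?_
      have hs0 : 0 < s n := by linarith
      simp only [hg]
      rw [floor_sum n hs0 (fun k => (((k : ℝ) - q n) / s n) ^ i * a n k)]
      split_ifs with hm
      · obtain ⟨d0, d1⟩ := hd _ hm
        have hp : 0 ≤ q n + s n * x := by
          by_contra hneg
          rw [Nat.floor_of_nonpos (by linarith)] at hm
          simp at hm
        have hc := floor_close hs0 hp
        set m := ⌊q n + s n * x⌋₊
        set y := ((m : ℝ) - q n) / s n with hy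
        have e1 : -|(m : ℝ) - q n| / (4 * s n) = -|y| / 4 := by
          rw [hy, abs_div, abs_of_pos hs0]; field_simp
        rw [e1] at d1
        have hc1 : |y - x| ≤ 1 := hc.trans (by rw [div_le_one hs0]; exact h1)
        have hxy : |x| ≤ |y| + 1 := by
          have := abs_sub_abs_le_abs_sub x y
          rw [abs_sub_comm] at this; linarith
        rw [Real.norm_eq_abs, abs_mul, abs_pow, abs_of_nonneg d0]
        calc |y| ^ i * a n m ≤ |y| ^ i * (C * Real.exp (-|y| / 4)) := by gcongr
          _ = C * (|y| ^ i * Real.exp (-|y| / 4)) := by ring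
          _ ≤ C * (i.factorial * 8 ^ i * Real.exp (-|y| / 8)) := by
            gcongr C * ?_
            exact pow_exp_bound i (abs_nonneg y)
          _ ≤ C * (i.factorial * 8 ^ i * (Real.exp (1 / 8) * Real.exp (-|x| / 8))) := by
            rw [← Real.exp_add]
            gcongr
            linarith
          _ = _ := by ring
      · rw [norm_zero]; positivity
    · exact integrable_exp_abs8.const_mul _
    · refine Eventually.of_forall fun x => ?_
      have hpos : ∀ᶠ n in atTop, 0 ≤ q n + s n * x := by
        filter_upwards [hs1, hqs.eventually_ge_atTop (-x)] with n h1 h2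
        rw [le_div_iff₀ (by linarith)] at h2
        linarith
      have hy : Tendsto (fun n => ((⌊q n + s n * x⌋₊ : ℝ) - q n) / s n) atTop (𝓝 x) := by
        rw [tendsto_iff_norm_sub_tendsto_zero]
        refine squeeze_zero' (Eventually.of_forall fun _ => norm_nonneg _) ?_
          (tendsto_const_nhds.div_atTop hs : Tendsto (fun n => 1 / s n) atTop (𝓝 0))
        filter_upwards [hs1, hpos] with n h1 h2
        exact floor_close (by linarith) h2
      refine ((hy.pow i).mul (hptw x)).congr' ?_
      filter_upwards [hs1] with n h1
      simp only [hg]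
      rw [floor_sum n (by linarith) (fun k => (((k : ℝ) - q n) / s n) ^ i * a n k)]
      split_ifs <;> simp
  refine key.congr' ?_
  filter_upwards [hs1] with n h1
  have hs0 : 0 < s n := by linarith
  simp only [hg]
  rw [integral_finsetSum]
  · refine Finset.sum_congr rfl fun k _ => ?_
    rw [integral_indicator_const _ measurableSet_Ico, measureReal_def, Real.volume_Ico, smul_eq_mul]
    have : ((k : ℝ) + 1 - q n) / s n - ((k : ℝ) - q n) / s n = 1 / s n := by field_simp; ring
    rw [this, ENNReal.toReal_ofReal (by positivity)]; ring
  · intro k _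
    refine (integrable_indicator_iff measurableSet_Ico).2 ?_
    exact integrableOn_const (by simp)

lemma gauss0 : ∫ x : ℝ, x ^ 0 * Real.exp (-x ^ 2 / 2) = Real.sqrt (2 * Real.pi) := by
  have := integral_gaussian (1 / 2)
  rw [show Real.pi / (1 / 2) = 2 * Real.pi by ring] at this
  rw [← this]; congr 1; ext x; simp; ring

lemma gauss1 : ∫ x : ℝ, x ^ 1 * Real.exp (-x ^ 2 / 2) = 0 := by
  have h := integral_neg_eq_self (fun x : ℝ => x ^ 1 * Real.exp (-x ^ 2 / 2)) volume
  simp only [pow_one, neg_sq, neg_mul] at h ⊢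
  rw [integral_neg] at h
  linarith

lemma gauss2 : ∫ x : ℝ, x ^ 2 * Real.exp (-x ^ 2 / 2) = Real.sqrt (2 * Real.pi) := by
  have hd : ∀ x : ℝ, HasDerivAt (fun x : ℝ => -Real.exp (-x ^ 2 / 2)) (x * Real.exp (-x ^ 2 / 2)) x := by
    intro x
    have := (((hasDerivAt_pow 2 x).neg.div_const 2).exp).neg
    exact this.congr_deriv (by simp; ring)
  have e : ∀ x : ℝ, Real.exp (-x ^ 2 / 2) = Real.exp (-(1 / 2) * x ^ 2) := by
    intro x; congr 1; ring
  have i0 : Integrable fun x : ℝ => Real.exp (-x ^ 2 / 2) := by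
    simp only [e]; exact integrable_exp_neg_mul_sq (by norm_num)
  have i1 : Integrable fun x : ℝ => x * Real.exp (-x ^ 2 / 2) := by
    simp only [e]; exact integrable_mul_exp_neg_mul_sq (by norm_num)
  have i2 : Integrable fun x : ℝ => x ^ 2 * Real.exp (-x ^ 2 / 2) := by
    simp only [e]
    have := integrable_rpow_mul_exp_neg_mul_sq (b := 1 / 2) (by norm_num) (s := 2) (by norm_num)
    simpa using this
  have := integral_mul_deriv_eq_deriv_mul_of_integrable (u := fun x : ℝ => x) (u' := fun _ => 1)
    (v := fun x : ℝ => -Real.exp (-x ^ 2 / 2)) (v' := fun x => x * Real.exp (-x ^ 2 / 2))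
    (fun x _ => hasDerivAt_id x) (fun x _ => hd x) ?_ ?_ ?_
  · rw [← gauss0]
    simp only [one_mul, integral_neg, neg_neg, pow_zero] at this ⊢
    rw [← this]; congr 1; ext x; ring
  · refine i2.congr (Eventually.of_forall fun x => ?_)
    simp only [Pi.mul_apply]; ring
  · refine i0.neg.congr (Eventually.of_forall fun x => ?_)
    simp
  · refine i1.neg.congr (Eventually.of_forall fun x => ?_)
    simp
end ChordBubbles
end

section
namespace ChordBubbles
open Filter Topology

lemma near_k {n : ℕ} {l s q X : ℝ} (h : Par n l s q) (hX : 1 ≤ X) (hXs : 4 * X ^ 2 + X + 11 ≤ s)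
    {k : ℕ} (hk : |(k : ℝ) - q| ≤ X * s) : 2 ≤ k ∧ k ≤ n ∧ (k : ℝ) + 1 ≤ 2 * q := by
  obtain ⟨g1, g2, g3, g4⟩ := h.q_ge
  obtain ⟨hl, hs, hq, hn, hll⟩ := h
  rw [abs_le] at hk
  have hXs' : X ≤ s := by nlinarith
  have h1 : X * s ≤ s ^ 2 := by nlinarith
  have h2 : (2 : ℝ) ≤ k := by nlinarith
  have h3 : (k : ℝ) + 1 ≤ 2 * q := by nlinarith
  refine ⟨by exact_mod_cast h2, ?_, h3⟩
  have : (k : ℝ) ≤ n := by linarith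
  exact_mod_cast this

lemma eps_eq {n : ℕ} {l s q : ℝ} (h : Par n l s q) :
    2 * q * Real.exp (1 - l) = 2 * Real.exp 1 * Real.sqrt (Real.pi / l) := by
  obtain ⟨g1, g2, g3, g4⟩ := h.q_ge
  obtain ⟨hl, hs, hq, hn, hll⟩ := h
  have hn0 : (0 : ℝ) < n := by linarith
  have e1 : Real.exp (2 * l) = n / Real.pi := by
    rw [hll, show 2 * (1 / 2 * Real.log (n / Real.pi)) = Real.log (n / Real.pi) by ring,
      Real.exp_log (div_pos hn0 Real.pi_pos)]
  have e2 : (q * Real.exp (-l)) ^ 2 = Real.pi / l := by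
    have : Real.exp (-l) ^ 2 = (Real.exp (2 * l))⁻¹ := by
      rw [← Real.exp_neg, ← Real.exp_nat_mul]; congr 1; push_cast; ring
    have hq0 : q ≠ 0 := by linarith
    have hl0 : l ≠ 0 := by linarith
    rw [mul_pow, this, e1, hn]
    field_simp
  have e3 : Real.sqrt (Real.pi / l) = q * Real.exp (-l) := by
    rw [← e2, Real.sqrt_sq (by have := Real.exp_pos (-l); nlinarith)]
  rw [e3, sub_eq_add_neg, Real.exp_add]; ring

lemma R_ratio {n : ℕ} {l s q X : ℝ} (h : Par n l s q) (hX : 1 ≤ X) (hXs : 4 * X ^ 2 + X + 11 ≤ s)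
    {k : ℕ} (hk : |(k : ℝ) - q| ≤ X * s) :
    1 - 2 * Real.exp 1 * Real.sqrt (Real.pi / l) ≤ R n k / FF n k ∧ R n k / FF n k ≤ 1 := by
  obtain ⟨k2, kn, kq⟩ := near_k h hX hXs hk
  have hF := FF_pos (n := n) (k := k) (by omega) kn
  refine ⟨?_, by rw [div_le_one hF]; exact R_le n k (by omega) kn⟩
  rw [le_div_iff₀ hF, mul_comm]
  refine le_trans ?_ (le_R n k k2 kn)
  refine mul_le_mul_of_nonneg_left (sub_le_sub_left ?_ _) hF.le
  rw [← eps_eq h]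
  have kr : (2 : ℝ) ≤ k := by exact_mod_cast k2
  have knr : (k : ℝ) ≤ n := by exact_mod_cast kn
  obtain ⟨hl, hs, hq, hn, hll⟩ := h
  have hXs' : X ≤ l * s := by nlinarith
  obtain ⟨a, -⟩ := near_real (by linarith) (by linarith) hXs' hq hn hk kr
  have hs0 : 0 < s := by linarith
  have b : -1 ≤ -((k : ℝ) - q) / s ^ 2 - (4 * X ^ 2 + 10) / s ^ 2 := by
    rw [← sub_div, le_div_iff₀ (by positivity)]
    have := (abs_le.1 hk).2
    nlinarith
  have c : (1 - 1 / (k : ℝ) ^ 2) ^ ((n : ℝ) - k / 2) ≤ Real.exp (1 - l) := by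
    have c1 : 1 - 1 / (k : ℝ) ^ 2 ≤ Real.exp (-(1 / (k : ℝ) ^ 2)) := by
      have := Real.add_one_le_exp (-(1 / (k : ℝ) ^ 2)); linarith
    have c0 : 0 ≤ 1 - 1 / (k : ℝ) ^ 2 := by
      rw [sub_nonneg, div_le_one (by positivity)]; nlinarith
    calc _ ≤ (Real.exp (-(1 / (k : ℝ) ^ 2))) ^ ((n : ℝ) - k / 2) :=
          Real.rpow_le_rpow c0 c1 (by linarith)
      _ = Real.exp (-(1 / (k : ℝ) ^ 2) * ((n : ℝ) - k / 2)) := by rw [← Real.exp_mul]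
      _ ≤ _ := by
        rw [Real.exp_le_exp]
        have : -(1 / (k : ℝ) ^ 2) * ((n : ℝ) - k / 2) = -(n / (k : ℝ) ^ 2 - 1 / (2 * k)) := by
          field_simp
        rw [this]; linarith
  have c0 : 0 ≤ 1 - 1 / (k : ℝ) ^ 2 := by
    rw [sub_nonneg, div_le_one (by positivity)]; nlinarith
  exact mul_le_mul kq c (Real.rpow_nonneg c0 _) (by linarith)

noncomputable def lam (n : ℕ) : ℝ := 1 / 2 * Real.log (n / Real.pi)
noncomputable def sg (n : ℕ) : ℝ := Real.sqrt (Real.sqrt (n / (4 * lam n ^ 3)))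
noncomputable def qq (n : ℕ) : ℝ := 2 * lam n * sg n ^ 2

lemma tendsto_ndivpi : Tendsto (fun n : ℕ => (n : ℝ) / Real.pi) atTop atTop :=
  tendsto_natCast_atTop_atTop.atTop_div_const Real.pi_pos

lemma tendsto_lam : Tendsto lam atTop atTop :=
  (Real.tendsto_log_atTop.comp tendsto_ndivpi).const_mul_atTop (by norm_num)

lemma tendsto_sg : Tendsto sg atTop atTop := by
  refine Real.tendsto_sqrt_atTop.comp (Real.tendsto_sqrt_atTop.comp ?_)
  have h : Tendsto (fun y : ℝ => Real.log y ^ 3 / y) atTop (𝓝 0) :=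
    (Real.isLittleO_pow_log_id_atTop (n := 3)).tendsto_div_nhds_zero
  have h1 : Tendsto (fun y : ℝ => Real.log y ^ 3 / y) atTop (𝓝[>] 0) := by
    rw [tendsto_nhdsWithin_iff]
    refine ⟨h, ?_⟩
    filter_upwards [eventually_gt_atTop 1] with y hy
    exact div_pos (pow_pos (Real.log_pos hy) 3) (by linarith)
  have h2 := ((tendsto_inv_nhdsGT_zero.comp h1).const_mul_atTop
    (show (0 : ℝ) < 2 * Real.pi by positivity)).comp tendsto_ndivpi
  refine h2.congr fun n => ?_
  simp only [Function.comp, lam]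
  rw [inv_div]
  by_cases hl : Real.log (n / Real.pi) = 0
  · simp [hl]
  · field_simp; norm_num; ring

lemma sg_sq {n : ℕ} : sg n ^ 2 = Real.sqrt (n / (4 * lam n ^ 3)) := by
  unfold sg; rw [Real.sq_sqrt (Real.sqrt_nonneg _)]

lemma par_ev : ∀ᶠ n in atTop, Par n (lam n) (sg n) (qq n) := by
  filter_upwards [tendsto_lam.eventually_ge_atTop 2, tendsto_sg.eventually_ge_atTop 100] with n h1 h2
  refine ⟨h1, h2, rfl, ?_, rfl⟩
  have : sg n ^ 4 = n / (4 * lam n ^ 3) := by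
    rw [show sg n ^ 4 = (sg n ^ 2) ^ 2 by ring, sg_sq, Real.sq_sqrt (by positivity)]
  have e : lam n * qq n ^ 2 = 4 * lam n ^ 3 * sg n ^ 4 := by unfold qq; ring
  rw [e, this]
  field_simp

noncomputable def aa (n k : ℕ) : ℝ := R n k / FF n ⌊qq n⌋₊

lemma FF_ratio {n k m : ℕ} (hk : 1 ≤ k) (hkn : k ≤ n) (hm : 1 ≤ m) (hmn : m ≤ n) :
    FF n k / FF n m = Real.exp (Lg n k - Lg n m) := by
  unfold Lg
  rw [Real.exp_sub, Real.exp_log (FF_pos hk hkn), Real.exp_log (FF_pos hm hmn)]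

lemma aa_dom : ∀ᶠ n in atTop, ∀ k ∈ Finset.Icc 1 n, 0 ≤ aa n k ∧
    aa n k ≤ Real.exp 3 * Real.exp (-|(k : ℝ) - qq n| / (4 * sg n)) := by
  filter_upwards [par_ev] with n h k hk
  rw [Finset.mem_Icc] at hk
  obtain ⟨m1, mn, -, -⟩ := h.k0
  have hF := FF_pos m1 mn
  refine ⟨div_nonneg (Nat.cast_nonneg _) hF.le, ?_⟩
  calc aa n k ≤ FF n k / FF n ⌊qq n⌋₊ := by
        unfold aa; gcongr; exact R_le n k hk.1 hk.2
    _ = Real.exp (Lg n k - Lg n ⌊qq n⌋₊) := FF_ratio hk.1 hk.2 m1 mn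
    _ ≤ _ := by
      rw [← Real.exp_add, Real.exp_le_exp]
      have := dom h hk.1 hk.2
      rw [neg_div]; linarith

lemma aa_ptw (x : ℝ) : Tendsto (fun n => if ⌊qq n + sg n * x⌋₊ ∈ Finset.Icc 1 n then
      aa n ⌊qq n + sg n * x⌋₊ else 0) atTop (𝓝 (Real.exp (-x ^ 2 / 2))) := by
  set X := |x| + 1 with hX
  have hX1 : 1 ≤ X := by have := abs_nonneg x; linarith
  set k : ℕ → ℕ := fun n => ⌊qq n + sg n * x⌋₊ with hk
  set m : ℕ → ℕ := fun n => ⌊qq n⌋₊ with hm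
  have hbig : ∀ᶠ n in atTop, 4 * X ^ 2 + X + 11 ≤ sg n := tendsto_sg.eventually_ge_atTop _
  have inv0 : Tendsto (fun n => 1 / sg n) atTop (𝓝 0) := tendsto_const_nhds.div_atTop tendsto_sg
  have hclose : ∀ᶠ n in atTop, |((k n : ℝ) - qq n) / sg n - x| ≤ 1 / sg n := by
    filter_upwards [hbig, par_ev] with n h1 h2
    obtain ⟨g1, g2, g3, g4⟩ := h2.q_ge
    have hs := h2.2.1
    refine floor_close (by linarith) ?_
    have : -X ≤ x := by have := neg_abs_le x; linarith
    nlinarith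
  have hkX : ∀ᶠ n in atTop, |(k n : ℝ) - qq n| ≤ X * sg n := by
    filter_upwards [hclose, par_ev] with n h1 h2
    have hs : 100 ≤ sg n := h2.2.1
    have hs0 : 0 < sg n := by linarith
    have e : (k n : ℝ) - qq n = ((k n : ℝ) - qq n) / sg n * sg n := by field_simp
    rw [e, abs_mul, abs_of_pos hs0]
    gcongr
    have := abs_sub_abs_le_abs_sub (((k n : ℝ) - qq n) / sg n) x
    have h3 : 1 / sg n ≤ 1 := by rw [div_le_one hs0]; linarith
    linarith
  have hy : Tendsto (fun n => ((k n : ℝ) - qq n) / sg n) atTop (𝓝 x) := by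
    rw [tendsto_iff_norm_sub_tendsto_zero]
    exact squeeze_zero' (Eventually.of_forall fun _ => norm_nonneg _) hclose inv0
  have hy0 : Tendsto (fun n => ((m n : ℝ) - qq n) / sg n) atTop (𝓝 0) := by
    rw [tendsto_zero_iff_norm_tendsto_zero]
    refine squeeze_zero' (Eventually.of_forall fun _ => norm_nonneg _) ?_ inv0
    filter_upwards [par_ev] with n h2
    have hs : 100 ≤ sg n := h2.2.1
    have := floor_close (q := qq n) (s := sg n) (x := 0) (by linarith) (by have := h2.q_ge; linarith)
    simp only [mul_zero, add_zero, sub_zero] at this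
    exact this
  have hE : Tendsto (fun n => (Lg n (k n) + ((k n : ℝ) - qq n) ^ 2 / (2 * sg n ^ 2)) -
      (Lg n (m n) + ((m n : ℝ) - qq n) ^ 2 / (2 * sg n ^ 2))) atTop (𝓝 0) := by
    rw [tendsto_zero_iff_norm_tendsto_zero]
    refine squeeze_zero' (Eventually.of_forall fun _ => norm_nonneg _) ?_
      (tendsto_const_nhds.div_atTop tendsto_sg :
        Tendsto (fun n => ((X + 1) * (4 * (X + 1) ^ 2 + 11)) / sg n) atTop (𝓝 0))
    filter_upwards [hkX, hbig, par_ev] with n h1 h2 h3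
    exact ptw h3 (by linarith) (by nlinarith) h1
  have hL : Tendsto (fun n => Real.exp (Lg n (k n) - Lg n (m n))) atTop (𝓝 (Real.exp (-x ^ 2 / 2))) := by
    refine (Real.continuous_exp.tendsto _).comp ?_
    have := (hE.sub ((hy.pow 2).div_const 2)).add ((hy0.pow 2).div_const 2)
    have e : (0 : ℝ) - x ^ 2 / 2 + 0 ^ 2 / 2 = -x ^ 2 / 2 := by ring
    rw [e] at this
    refine this.congr fun n => ?_
    simp only [div_pow, div_div]
    rw [mul_comm (sg n ^ 2) 2]
    ring
  have hR : Tendsto (fun n => R n (k n) / FF n (k n)) atTop (𝓝 1) := by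
    have h0 : Tendsto (fun n => 1 - 2 * Real.exp 1 * Real.sqrt (Real.pi / lam n)) atTop (𝓝 1) := by
      have h1 : Tendsto (fun n => Real.pi / lam n) atTop (𝓝 0) :=
        tendsto_const_nhds.div_atTop tendsto_lam
      have := ((Real.continuous_sqrt.tendsto _).comp h1).const_mul (2 * Real.exp 1)
      simpa using this.const_sub 1
    refine tendsto_of_tendsto_of_tendsto_of_le_of_le' h0 tendsto_const_nhds ?_ ?_
    · filter_upwards [hkX, hbig, par_ev] with n h1 h2 h3
      exact (R_ratio h3 hX1 h2 h1).1
    · filter_upwards [hkX, hbig, par_ev] with n h1 h2 h3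
      exact (R_ratio h3 hX1 h2 h1).2
  have := hR.mul hL
  rw [one_mul] at this
  refine this.congr' ?_
  filter_upwards [hkX, hbig, par_ev] with n h1 h2 h3
  obtain ⟨k2, kn, kq⟩ := near_k h3 hX1 h2 h1
  obtain ⟨m1, mn, -, -⟩ := h3.k0
  rw [if_pos (Finset.mem_Icc.2 ⟨by omega, kn⟩), ← FF_ratio (by omega) kn m1 mn]
  have hF := FF_pos (n := n) (k := k n) (by omega) kn
  have hF2 := FF_pos m1 mn
  change _ = (R n (k n) : ℝ) / FF n (m n)
  have hF2' : 0 < FF n (m n) := hF2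
  change (R n (k n) : ℝ) / FF n (k n) * (FF n (k n) / FF n (m n)) = _
  field_simp

noncomputable def TT (i n : ℕ) : ℝ :=
  ∑ k ∈ Finset.Icc 1 n, (((k : ℝ) - qq n) / sg n) ^ i * aa n k / sg n

lemma tendsto_TT (i : ℕ) : Tendsto (TT i) atTop (𝓝 (∫ x : ℝ, x ^ i * Real.exp (-x ^ 2 / 2))) := by
  refine lemA qq sg aa (Real.exp 3) (Real.exp_pos 3).le tendsto_sg ?_ aa_dom aa_ptw i
  refine (Tendsto.atTop_mul_atTop₀ (tendsto_lam.const_mul_atTop two_pos) tendsto_sg).congr' ?_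
  filter_upwards [par_ev] with n h
  have hs : 100 ≤ sg n := h.2.1
  unfold qq
  have : sg n ≠ 0 := by linarith
  field_simp

lemma var_eq {n : ℕ} (h : Par n (lam n) (sg n) (qq n)) (hT : TT 0 n ≠ 0) :
    varShort n = sg n ^ 2 * (TT 2 n / TT 0 n - (TT 1 n / TT 0 n) ^ 2) := by
  have hs : 100 ≤ sg n := h.2.1
  have hs0 : sg n ≠ 0 := by linarith
  obtain ⟨m1, mn, -, -⟩ := h.k0
  have hF := (FF_pos m1 mn).ne'
  set S := sg n
  set Q := qq n
  set F := FF n ⌊Q⌋₊ with hFd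
  have hR : ∀ k, (R n k : ℝ) = F * aa n k := by
    intro k; unfold aa; rw [← hFd]; field_simp
  have e0 : ∑ k ∈ Finset.Icc 1 n, (R n k : ℝ) = F * S * TT 0 n := by
    unfold TT; rw [Finset.mul_sum]
    refine Finset.sum_congr rfl fun k _ => ?_
    rw [hR]; change _ = F * S * (((k - Q) / S) ^ 0 * aa n k / S); field_simp
  have e1 : ∑ k ∈ Finset.Icc 1 n, (k : ℝ) * R n k = F * S * (S * TT 1 n + Q * TT 0 n) := by
    unfold TT; simp only [mul_add, Finset.mul_sum]
    rw [← Finset.sum_add_distrib]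
    refine Finset.sum_congr rfl fun k _ => ?_
    rw [hR]; change _ = F * S * (S * (((k - Q) / S) ^ 1 * aa n k / S)) + F * S * (Q * (((k - Q) / S) ^ 0 * aa n k / S))
    field_simp; ring
  have hm : meanShort n = Q + S * (TT 1 n / TT 0 n) := by
    unfold meanShort; rw [e0, e1]; field_simp; ring
  set M := TT 1 n / TT 0 n with hM
  have e2 : ∑ k ∈ Finset.Icc 1 n, ((k : ℝ) - meanShort n) ^ 2 * R n k =
      F * S * (S ^ 2 * (TT 2 n - 2 * M * TT 1 n + M ^ 2 * TT 0 n)) := by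
    rw [hm]
    unfold TT; simp only [mul_add, mul_sub, Finset.mul_sum]
    rw [← Finset.sum_sub_distrib, ← Finset.sum_add_distrib]
    refine Finset.sum_congr rfl fun k _ => ?_
    rw [hR]
    change _ = F * S * (S ^ 2 * (((k - Q) / S) ^ 2 * aa n k / S)) - F * S * (S ^ 2 * (2 * M * (((k - Q) / S) ^ 1 * aa n k / S))) + F * S * (S ^ 2 * (M ^ 2 * (((k - Q) / S) ^ 0 * aa n k / S)))
    generalize M = M'
    field_simp; ring
  unfold varShort
  rw [e2, e0]
  have : TT 1 n = M * TT 0 n := by rw [hM]; field_simp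
  rw [this]
  generalize M = M'
  field_simp; ring

lemma sg_limit : Tendsto (fun n : ℕ => sg n ^ 2 * Real.sqrt ((Real.log n) ^ 3 / (2 * (n : ℝ)))) atTop (𝓝 1) := by
  have hlog : Tendsto (fun n : ℕ => Real.log n / (2 * lam n)) atTop (𝓝 1) := by
    have h1 : Tendsto (fun n => 1 + Real.log Real.pi / (2 * lam n)) atTop (𝓝 (1 + 0)) :=
      tendsto_const_nhds.add (tendsto_const_nhds.div_atTop (tendsto_lam.const_mul_atTop two_pos))
    rw [add_zero] at h1
    refine h1.congr' ?_
    filter_upwards [par_ev, eventually_gt_atTop 0] with n h hn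
    have hl : 2 ≤ lam n := h.1
    have hn' : (n : ℝ) ≠ 0 := by positivity
    have : Real.log n = 2 * lam n + Real.log Real.pi := by
      unfold lam; rw [Real.log_div hn' Real.pi_ne_zero]; ring
    have hl0 : 2 * lam n ≠ 0 := by linarith
    rw [this, add_div, div_self hl0]
  have h2 := (Real.continuous_sqrt.tendsto _).comp (hlog.pow 3)
  rw [one_pow, Real.sqrt_one] at h2
  refine h2.congr' ?_
  filter_upwards [par_ev, eventually_gt_atTop 0] with n h hn
  have hl : 2 ≤ lam n := h.1
  have hn' : (0 : ℝ) < n := by positivity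
  rw [sg_sq, ← Real.sqrt_mul (by positivity)]
  simp only [Function.comp]
  congr 1
  field_simp; norm_num

theorem main : Filter.Tendsto (fun n : ℕ => varShort n * Real.sqrt ((Real.log n) ^ 3 / (2 * (n : ℝ))))
      Filter.atTop (nhds 1) := by
  have t0 := tendsto_TT 0
  have t1 := tendsto_TT 1
  have t2 := tendsto_TT 2
  rw [gauss0] at t0
  rw [gauss1] at t1
  rw [gauss2] at t2
  have hp : Real.sqrt (2 * Real.pi) ≠ 0 := by positivity
  have hV : Tendsto (fun n => TT 2 n / TT 0 n - (TT 1 n / TT 0 n) ^ 2) atTop (𝓝 1) := by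
    have := (t2.div t0 hp).sub ((t1.div t0 hp).pow 2)
    rw [div_self hp, zero_div, zero_pow two_ne_zero, sub_zero] at this
    exact this
  have := sg_limit.mul hV
  rw [one_mul] at this
  refine this.congr' ?_
  filter_upwards [par_ev, t0.eventually_ne hp] with n h1 h2
  rw [var_eq h1 h2]; ring
end ChordBubbles
end

namespace ChordBubbles

/-- The variance of the number of short chords in crystallized diagrams with `n` chords is
asymptotic to `√(2n / log³ n)` as `n → ∞`. -/
theorem varShort_asymptotic :
    Filter.Tendsto (fun n : ℕ => varShort n * Real.sqrt ((Real.log n) ^ 3 / (2 * (n : ℝ))))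
      Filter.atTop (nhds 1) := by
  exact main

end ChordBubbles
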